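/- arXiv:2003.08894 — 2 statements merged into one kernel-verified Lean document; each statement's English description precedes it below -/
import Mathlib

section
/- Let G be a finitely generated group with finite generating set S, let H_n be geodesic spaces with Δ-thin triangles, and let ρ_n : G → Isom(H_n) be a sequence of representations that blows up. Let K be the complete graph on vertex set G, x_n an approximate center of ρ_n, ι_n : K → H_n the equivariant straight map with ι_n(g) = ρ_n(g)x_n, and d_n = ι_n*d_{H_n}. Then there is a subsequence and λ_n → 0 so that λ_n d_n converges pointwise to a pseudo-metric d̄ on K whose associated metric space is an ℝ-tree Γ; the action of G on K induces an isometric action σ of G on Γ; some element of σ(G) is hyperbolic; and the length functions satisfy lim L(ρ_n) = L(σ) in PLF(G). If in addition σ is irreducible and L(σ) takes only integer values, then the minimal G-invariant subtree of Γ is a simplicial tree on which G acts with the same length function as σ. -/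
open Set Filter Metric

section Common

variable {H : Type*} [MetricSpace H]

/-- `γ` parametrizes a geodesic from `a` to `b` by arclength on `[0, dist a b]`. -/
def IsGeodesicSegment (γ : ℝ → H) (a b : H) : Prop :=
  γ 0 = a ∧ γ (dist a b) = b ∧
    ∀ s ∈ Set.Icc (0:ℝ) (dist a b), ∀ t ∈ Set.Icc (0:ℝ) (dist a b),
      dist (γ s) (γ t) = |s - t|

/-- A geodesic space: every pair of points is joined by a geodesic. -/
def GeodesicSpace (H : Type*) [MetricSpace H] : Prop :=
  ∀ a b : H, ∃ γ : ℝ → H, IsGeodesicSegment γ a b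

/-- The image of a geodesic segment from `a` to `b`. -/
def segImage (γ : ℝ → H) (a b : H) : Set H :=
  γ '' Set.Icc 0 (dist a b)

/-- A space has `Δ`-thin triangles if each side of every geodesic triangle is contained
in the `Δ`-neighborhood of the union of the other two sides. -/
def ThinTriangles (H : Type*) [MetricSpace H] (Δ : ℝ) : Prop :=
  ∀ a b c : H, ∀ γab γbc γca : ℝ → H,
    IsGeodesicSegment γab a b → IsGeodesicSegment γbc b c → IsGeodesicSegment γca c a →
      ∀ x ∈ segImage γab a b, ∃ y ∈ segImage γbc b c ∪ segImage γca c a, dist x y ≤ Δ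

/-- An arc from `a` to `b`, parametrized (injectively and continuously) by `[0,1]`. -/
def IsArcParam (α : ℝ → H) (a b : H) : Prop :=
  ContinuousOn α (Set.Icc 0 1) ∧ Set.InjOn α (Set.Icc 0 1) ∧ α 0 = a ∧ α 1 = b

/-- An `ℝ`-tree: a metric space in which every pair of points is joined by a geodesic
(so it is a path-metric space and arcs are isometric to intervals of `ℝ`) and in which
the arc joining two points is unique. -/
def IsRTree (X : Type*) [MetricSpace X] : Prop :=
  (∀ a b : X, ∃ γ : ℝ → X, IsGeodesicSegment γ a b) ∧
  ∀ a b : X, ∀ α β : ℝ → X, IsArcParam α a b → IsArcParam β a b →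
    α '' Set.Icc 0 1 = β '' Set.Icc 0 1

/-- The translation length of an isometry. -/
noncomputable def translationLength {X : Type*} [MetricSpace X] (τ : X ≃ᵢ X) : ℝ :=
  ⨅ x : X, dist x (τ x)

/-- The core of an isometry of an `ℝ`-tree: points moved the minimal distance. -/
def isomCore {X : Type*} [MetricSpace X] (τ : X ≃ᵢ X) : Set X :=
  {x : X | dist x (τ x) = translationLength τ}

/-- An elliptic isometry: one having a fixed point. -/
def IsElliptic {X : Type*} [MetricSpace X] (τ : X ≃ᵢ X) : Prop :=
  ∃ x, τ x = x

/-- A hyperbolic isometry of an `ℝ`-tree: positive translation length, with core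
isometric to the real line (its axis). -/
def IsHyperbolicIsom {X : Type*} [MetricSpace X] (τ : X ≃ᵢ X) : Prop :=
  0 < translationLength τ ∧
    ∃ e : ℝ → X, (∀ s t : ℝ, dist (e s) (e t) = |s - t|) ∧ Set.range e = isomCore τ

/-- A metric simplicial tree: an `ℝ`-tree together with a closed discrete set `V` of
vertices such that each connected component of the complement of `V` is an open edge:
it is the interior of a geodesic segment of positive length with endpoints in `V`. -/
def IsMetricSimplicialTree (X : Type*) [MetricSpace X] : Prop :=
  IsRTree X ∧
    ∃ V : Set X, IsClosed V ∧
      (∀ v ∈ V, ∃ ε > 0, ∀ w ∈ V, dist v w < ε → w = v) ∧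
      ∀ x ∈ Vᶜ, ∃ L > (0:ℝ), ∃ f : ℝ → X,
        (∀ s ∈ Set.Icc (0:ℝ) L, ∀ t ∈ Set.Icc (0:ℝ) L, dist (f s) (f t) = |s - t|) ∧
        f '' Set.Ioo 0 L = connectedComponentIn Vᶜ x ∧ f 0 ∈ V ∧ f L ∈ V

end Common

open scoped Classical

section CompleteGraph

/-- The convex combination `(1-t)·δ_u + t·δ_v` of two Dirac functions on `G`. -/
noncomputable def deltaComb {G : Type*} (u v : G) (t : ℝ) : G → ℝ :=
  fun x => (1 - t) * (if x = u then 1 else 0) + t * (if x = v then 1 else 0)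

/-- The geometric realization of the complete graph `K(G)` with vertex set `G`:
all convex combinations of two Dirac functions; `deltaComb u v t` is the point at
parameter `t` on the edge joining the vertices `u` and `v`. -/
def KG (G : Type*) : Type _ :=
  {f : G → ℝ // ∃ u v : G, ∃ t : ℝ, t ∈ Set.Icc (0:ℝ) 1 ∧ f = deltaComb u v t}

/-- The point at parameter `t ∈ [0,1]` on the edge of `K(G)` joining `u` to `v`. -/
noncomputable def kpt {G : Type*} (u v : G) (t : ℝ) (ht : t ∈ Set.Icc (0:ℝ) 1) : KG G :=
  ⟨deltaComb u v t, u, v, t, ht, rfl⟩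

/-- The vertex of `K(G)` corresponding to `g : G`. -/
noncomputable def vtx {G : Type*} (g : G) : KG G :=
  kpt g g 0 ⟨le_refl _, zero_le_one⟩

/-- The action of `G` on `K(G)` by left multiplication on the vertices, extended
affinely over the edges. -/
noncomputable def leftMulKG {G : Type*} [Group G] (g : G) (p : KG G) : KG G :=
  ⟨fun x => p.1 (g⁻¹ * x), by
    obtain ⟨u, v, t, ht, hf⟩ := p.2
    refine ⟨g * u, g * v, t, ht, ?_⟩
    funext x
    rw [hf]
    simp [deltaComb, inv_mul_eq_iff_eq_mul]⟩

/-- A map `ι : K(G) → H` is straight if it is linear on each edge of `K(G)`. -/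
def StraightOnKG {G H : Type*} [MetricSpace H] (ι : KG G → H) : Prop :=
  ∀ u v : G, ∀ t : ℝ, ∀ ht : t ∈ Set.Icc (0:ℝ) 1,
    dist (ι (kpt u v 0 ⟨le_refl _, zero_le_one⟩)) (ι (kpt u v t ht))
      = t * dist (ι (kpt u v 0 ⟨le_refl _, zero_le_one⟩))
          (ι (kpt u v 1 ⟨zero_le_one, le_refl _⟩))

/-- `r_S(x) = max {d(x, ρ(α)x) : α ∈ S}`. -/
noncomputable def rS {G H : Type*} [MetricSpace H] (S : Finset G) (hS : S.Nonempty)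
    (ρ : G → (H ≃ᵢ H)) (x : H) : ℝ :=
  S.sup' hS (fun α => dist x (ρ α x))

/-- The rescaling factor `λ = (max {1, d(ι(1_G), ι(s)) : s ∈ S})⁻¹`. -/
noncomputable def rescaleFactor {G H : Type*} [Group G] [MetricSpace H]
    (S : Finset G) (hS : S.Nonempty) (ι : KG G → H) : ℝ :=
  (max 1 (S.sup' hS fun s => dist (ι (vtx (1 : G))) (ι (vtx s))))⁻¹

end CompleteGraph


namespace LL

/-- metric betweenness -/
def Bt {X : Type*} [MetricSpace X] (x y z : X) : Prop := dist x y + dist y z = dist x z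

/-- four point condition with constant `δ` -/
def FPd (X : Type*) [MetricSpace X] (δ : ℝ) : Prop :=
  ∀ x y z w : X, dist x z + dist y w ≤ max (dist x y + dist z w) (dist x w + dist y z) + δ

/-- exact four point condition -/
def FP (X : Type*) [MetricSpace X] : Prop :=
  ∀ x y z w : X, dist x z + dist y w ≤ max (dist x y + dist z w) (dist x w + dist y z)

/-- interpolation -/
def IP (X : Type*) [MetricSpace X] : Prop :=
  ∀ p q : X, ∀ s : ℝ, 0 ≤ s → s ≤ dist p q → ∃ r, dist p r = s ∧ dist r q = dist p q - s

section Tree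

variable {X : Type*} [MetricSpace X]

lemma FP.fpd (fp : FP X) : FPd X 0 := fun x y z w => by simpa using fp x y z w

lemma FP.or (fp : FP X) (x y z w : X) :
    dist x z + dist y w ≤ dist x y + dist z w ∨ dist x z + dist y w ≤ dist x w + dist y z :=
  le_max_iff.1 (fp x y z w)

lemma Bt.symm {x y z : X} (h : Bt x y z) : Bt z y x := by
  unfold Bt at *
  rw [dist_comm z y, dist_comm y x, dist_comm z x]; linarith

lemma bt_comm {x y z : X} : Bt x y z ↔ Bt z y x := ⟨Bt.symm, Bt.symm⟩

lemma bt_left (x y : X) : Bt x x y := by simp [Bt]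

lemma bt_right (x y : X) : Bt x y y := by simp [Bt]

lemma bt_self {x y : X} (h : Bt x y x) : x = y := by
  unfold Bt at h
  rw [dist_comm y x, dist_self] at h
  have := dist_nonneg (x := x) (y := y)
  exact dist_le_zero.1 (by linarith)

lemma bt_cat (fp : FP X) {x y z w : X} (h1 : Bt x y z) (h2 : Bt y z w) (hne : y ≠ z) :
    dist x w = dist x y + dist y z + dist z w := by
  have hp := dist_pos.2 hne
  have t1 := dist_triangle x z w
  unfold Bt at *
  rcases fp.or x y z w with h | h <;> linarith

lemma bt_cat1 (fp : FP X) {x y z w : X} (h1 : Bt x y z) (h2 : Bt y z w) (hne : y ≠ z) :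
    Bt x y w := by
  have := bt_cat fp h1 h2 hne
  unfold Bt at *; linarith

lemma bt_cat2 (fp : FP X) {x y z w : X} (h1 : Bt x y z) (h2 : Bt y z w) (hne : y ≠ z) :
    Bt x z w := by
  have := bt_cat fp h1 h2 hne
  unfold Bt at *; linarith

lemma bt_dir (fp : FP X) {x c z p : X} (h : Bt x c z) (hn : ¬ Bt x c p) : Bt p c z := by
  unfold Bt at *
  have t1 := dist_triangle x c p
  have t2 := dist_triangle p c z
  rw [dist_comm p c, dist_comm p z] at *
  rcases fp.or x c z p with h' | h'
  · linarith
  · exact absurd (by linarith) hn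

lemma bt_stab (fp : FP X) {u w z z' : X} (h : Bt u w z) (hd : dist z z' < dist z w) :
    Bt u w z' := by
  unfold Bt at *
  have t1 := dist_triangle u w z'
  rw [dist_comm z w] at hd
  have := dist_nonneg (x := w) (y := z')
  rcases fp.or u w z z' with h' | h' <;> linarith

lemma bt_trans1 {x y z w : X} (h1 : Bt x y z) (h2 : Bt x z w) : Bt x y w := by
  unfold Bt at *
  linarith [dist_triangle x y w, dist_triangle y z w]

lemma bt_trans2 {x y z w : X} (h1 : Bt x y z) (h2 : Bt x z w) : Bt y z w := by
  unfold Bt at *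
  linarith [dist_triangle x y w, dist_triangle y z w]

lemma bt_pos (fp : FP X) {a b r s : X} (h1 : Bt a r b) (h2 : Bt a s b)
    (hle : dist a r ≤ dist a s) : Bt a r s := by
  unfold Bt at *
  have t := dist_triangle a r s
  rcases fp.or a r b s with h' | h'
  · rw [dist_comm b s] at h'; linarith
  · linarith

lemma bt_uniq (fp : FP X) {a b r s : X} (h1 : Bt a r b) (h2 : Bt a s b)
    (he : dist a r = dist a s) : r = s := by
  have := bt_pos fp h1 h2 he.le
  unfold Bt at this
  exact dist_le_zero.1 (by linarith)

lemma bt_dist (fp : FP X) {a b r s : X} (h1 : Bt a r b) (h2 : Bt a s b) :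
    dist r s = |dist a r - dist a s| := by
  rcases le_total (dist a r) (dist a s) with h | h
  · have := bt_pos fp h1 h2 h
    unfold Bt at this
    rw [abs_of_nonpos (by linarith)]; linarith
  · have := bt_pos fp h2 h1 h
    unfold Bt at this
    rw [abs_of_nonneg (by linarith), dist_comm r s]; linarith

lemma fpd_le {δ : ℝ} (fp : FPd X δ) {a p b : X} (h : Bt a p b) (q : X) :
    dist p q ≤ max (dist a q - dist a p) (dist b q - dist p b) + δ := by
  have := fp a p b q
  unfold Bt at h
  rcases le_total (dist a p + dist b q) (dist a q + dist p b) with h' | h'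
  · rw [max_eq_right h'] at this
    have := le_max_left (dist a q - dist a p) (dist b q - dist p b)
    linarith
  · rw [max_eq_left h'] at this
    have := le_max_right (dist a q - dist a p) (dist b q - dist p b)
    linarith

lemma center (fp : FP X) (ip : IP X) (x y z : X) : ∃ c, Bt x c y ∧ Bt x c z ∧ Bt y c z := by
  have t1 := dist_triangle x y z
  have t2 := dist_triangle y x z
  have t3 := dist_triangle x z y
  rw [dist_comm y x] at t2
  rw [dist_comm z y] at t3
  obtain ⟨c, h1, h2⟩ := ip x y ((dist x y + dist x z - dist y z) / 2) (by linarith) (by linarith)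
  have hb : Bt x c y := by unfold Bt; linarith
  have h3 := fpd_le fp.fpd hb z
  have h4 := dist_triangle x c z
  have h5 := dist_triangle y c z
  rw [dist_comm y c] at h5
  rw [h1, h2] at h3
  have h6 : dist c z ≤ (dist x z + dist y z - dist x y) / 2 := by
    refine h3.trans ?_
    rw [add_zero]
    exact max_le (by linarith) (by linarith)
  refine ⟨c, hb, ?_, ?_⟩
  · unfold Bt; linarith
  · unfold Bt; rw [dist_comm y c]; linarith

lemma exists_geod (fp : FP X) (ip : IP X) (a b : X) : ∃ γ : ℝ → X, IsGeodesicSegment γ a b := by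
  have : ∀ s : ℝ, ∃ r, (0 ≤ s ∧ s ≤ dist a b) → dist a r = s ∧ dist r b = dist a b - s := by
    intro s
    by_cases h : 0 ≤ s ∧ s ≤ dist a b
    · obtain ⟨r, hr⟩ := ip a b s h.1 h.2
      exact ⟨r, fun _ => hr⟩
    · exact ⟨a, fun h' => absurd h' h⟩
  choose γ hγ using this
  refine ⟨γ, ?_, ?_, ?_⟩
  · have := (hγ 0 ⟨le_rfl, dist_nonneg⟩).1
    exact (dist_eq_zero.1 this).symm
  · have := (hγ (dist a b) ⟨dist_nonneg, le_rfl⟩).2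
    exact dist_eq_zero.1 (by linarith)
  · intro s hs t ht
    have h1 := hγ s hs
    have h2 := hγ t ht
    rw [bt_dist fp (a := a) (b := b) (by unfold Bt; linarith) (by unfold Bt; linarith), h1.1, h2.1]

lemma conn_convex (fp : FP X) {W : Set X} (hW : IsPreconnected W) {u v w : X} (hu : u ∈ W)
    (hv : v ∈ W) (h : Bt u w v) : w ∈ W := by
  by_contra hw
  have hwu : w ≠ u := fun e => hw (e ▸ hu)
  have hwv : w ≠ v := fun e => hw (e ▸ hv)
  have o1 : IsOpen {z : X | dist u z < dist u w + dist w z} :=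
    isOpen_lt (by fun_prop) (by fun_prop)
  have o2 : IsOpen {z : X | Bt u w z ∧ z ≠ w} := by
    rw [Metric.isOpen_iff]
    rintro z ⟨hz, hzw⟩
    refine ⟨dist z w, dist_pos.2 hzw, ?_⟩
    intro z' hz'
    rw [Metric.mem_ball, dist_comm] at hz'
    refine ⟨bt_stab fp hz hz', ?_⟩
    rintro rfl
    exact lt_irrefl _ hz'
  have := hW _ _ o1 o2 (by
    intro z hz
    by_cases hb : Bt u w z
    · exact Or.inr ⟨hb, fun e => hw (e ▸ hz)⟩
    · left
      exact lt_of_le_of_ne (dist_triangle u w z) (fun e => hb e.symm))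
    ⟨u, hu, by
      show dist u u < _
      rw [dist_self]
      have := dist_pos.2 hwu
      have := dist_nonneg (x := u) (y := w)
      linarith⟩ ⟨v, hv, h, hwv.symm⟩
  obtain ⟨z, _, h1, h2, _⟩ := this
  unfold Bt at h2
  exact absurd h1 (by simp [h2])

lemma arc_image (fp : FP X) (ip : IP X) {a b : X} {α : ℝ → X} (h : IsArcParam α a b) :
    α '' Set.Icc 0 1 = {z | Bt a z b} := by
  obtain ⟨hc, hi, h0, h1⟩ := h
  have conn : ∀ s t : ℝ, 0 ≤ s → t ≤ 1 → IsPreconnected (α '' Set.Icc s t) := by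
    intro s t hs ht
    exact isPreconnected_Icc.image _ (hc.mono (Set.Icc_subset_Icc hs ht))
  ext z
  constructor
  · rintro ⟨t, ht, rfl⟩
    obtain ⟨c, c1, c2, c3⟩ := center fp ip a b (α t)
    have m1 : c ∈ α '' Set.Icc 0 t :=
      conn_convex fp (conn 0 t le_rfl ht.2) ⟨0, ⟨le_rfl, ht.1⟩, h0⟩ ⟨t, ⟨ht.1, le_rfl⟩, rfl⟩ c2
    have m2 : c ∈ α '' Set.Icc t 1 :=
      conn_convex fp (conn t 1 ht.1 le_rfl) ⟨1, ⟨ht.2, le_rfl⟩, h1⟩ ⟨t, ⟨le_rfl, ht.2⟩, rfl⟩ c3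
    obtain ⟨s, hs, es⟩ := m1
    obtain ⟨s', hs', es'⟩ := m2
    have : s = s' := hi ⟨hs.1, hs.2.trans ht.2⟩ ⟨ht.1.trans hs'.1, hs'.2⟩ (es.trans es'.symm)
    have hst : s = t := le_antisymm hs.2 (this ▸ hs'.1)
    rw [hst] at es
    rw [es]; exact c1
  · intro hz
    exact conn_convex fp (conn 0 1 le_rfl le_rfl) ⟨0, by simp, h0⟩ ⟨1, by simp, h1⟩ hz

lemma isRTree (fp : FP X) (ip : IP X) : IsRTree X :=
  ⟨exists_geod fp ip, fun a b α β hα hβ => by rw [arc_image fp ip hα, arc_image fp ip hβ]⟩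

/-- IP propagates to subsegments -/
lemma ip_sub (fp : FP X) {a p q : X} (h : Bt a p q)
    (ip : ∀ s : ℝ, 0 ≤ s → s ≤ dist a q → ∃ r, dist a r = s ∧ dist r q = dist a q - s) :
    ∀ s : ℝ, 0 ≤ s → s ≤ dist p q → ∃ r, dist p r = s ∧ dist r q = dist p q - s := by
  intro s hs0 hs1
  have h' := h
  unfold Bt at h
  obtain ⟨r, h1, h2⟩ := ip (dist a p + s) (by positivity) (by linarith)
  refine ⟨r, ?_, by linarith⟩
  have : Bt a p r := bt_pos fp h' (by unfold Bt; linarith) (by linarith)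
  unfold Bt at this
  linarith

lemma bt_cases (fp : FP X) {a p b : X} (h : Bt a p b) (q : X) : Bt a p q ∨ Bt b p q := by
  by_cases h1 : Bt a p q
  · exact Or.inl h1
  · exact Or.inr (bt_dir fp h h1).symm

/-! Convexity -/

def Cvx (C : Set X) : Prop := ∀ u ∈ C, ∀ v ∈ C, ∀ w, Bt u w v → w ∈ C

lemma bt_fold {u v w c : X} (h : Bt u w v) (h1 : Bt u c w) (h2 : Bt v c w) : c = w := by
  unfold Bt at *
  have := dist_triangle u c v
  rw [dist_comm v c, dist_comm v w] at h2
  exact dist_le_zero.1 (by linarith [dist_nonneg (x := c) (y := w)])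

lemma cvx_not (fp : FP X) (o x : X) : Cvx {u | ¬ Bt o x u} := by
  intro u hu v hv w hw hb
  have e : x = w := bt_fold hw (bt_dir fp hb hu) (bt_dir fp hb hv)
  subst e
  exact hv (bt_dir fp hw (fun h => hu h.symm))

lemma cvx_bt (fp : FP X) (x c : X) : Cvx {u | Bt x c u} := by
  intro u hu v hv w hw
  by_contra hb
  have e : c = w := bt_fold hw (bt_dir fp hu hb).symm (bt_dir fp hv hb).symm
  subst e
  exact hb (bt_right x c)

lemma cvx_conn (fp : FP X) (ip : IP X) {C : Set X} (hC : Cvx C) : IsPreconnected C := by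
  apply isPreconnected_of_forall_pair
  intro u hu v hv
  obtain ⟨γ, g0, g1, g2⟩ := exists_geod fp ip u v
  refine ⟨γ '' Set.Icc 0 (dist u v), ?_, ⟨0, ⟨le_rfl, dist_nonneg⟩, g0⟩,
    ⟨dist u v, ⟨dist_nonneg, le_rfl⟩, g1⟩, ?_⟩
  · rintro _ ⟨s, hs, rfl⟩
    refine hC u hu v hv _ ?_
    have a1 := g2 0 ⟨le_rfl, dist_nonneg⟩ s hs
    have a2 := g2 s hs (dist u v) ⟨dist_nonneg, le_rfl⟩
    rw [g0, abs_of_nonpos (by linarith [hs.1])] at a1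
    rw [g1, abs_of_nonpos (by linarith [hs.2])] at a2
    unfold Bt; linarith
  · apply isPreconnected_Icc.image
    refine LipschitzOnWith.continuousOn (K := 1) ?_
    apply LipschitzOnWith.of_dist_le_mul
    intro s hs t ht
    rw [g2 s hs t ht, Real.dist_eq]; simp

end Tree

end LL

namespace LL

section Isom

variable {X : Type*} [MetricSpace X]

lemma Bt.map (τ : X ≃ᵢ X) {x y z : X} (h : Bt x y z) : Bt (τ x) (τ y) (τ z) := by
  unfold Bt at *
  simpa only [τ.dist_eq] using h

lemma Bt.of_map (τ : X ≃ᵢ X) {x y z : X} (h : Bt (τ x) (τ y) (τ z)) : Bt x y z := by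
  unfold Bt at *
  simpa only [τ.dist_eq] using h

lemma tl_le (τ : X ≃ᵢ X) (x : X) : translationLength τ ≤ dist x (τ x) :=
  ciInf_le ⟨0, by rintro _ ⟨y, rfl⟩; exact dist_nonneg⟩ x

lemma tl_nonneg (τ : X ≃ᵢ X) : 0 ≤ translationLength τ :=
  Real.iInf_nonneg fun _ => dist_nonneg

lemma disp_lower {δ : ℝ} (fp : FPd X δ) (τ : X ≃ᵢ X) (x y : X) :
    dist x (τ (τ x)) - dist x (τ x) ≤ dist y (τ y) + δ := by
  have h := fp x (τ x) (τ (τ x)) (τ y)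
  have e1 : dist (τ x) (τ y) = dist x y := τ.dist_eq _ _
  have e2 : dist (τ x) (τ (τ x)) = dist x (τ x) := τ.dist_eq _ _
  have e3 : dist (τ (τ x)) (τ y) = dist (τ x) y := τ.dist_eq _ _
  have t1 := dist_triangle (τ x) (τ y) y
  have t2 := dist_triangle x y (τ y)
  rw [dist_comm (τ y) y] at t1
  rw [e1, e2, e3] at h
  rw [e1] at t1
  have : max (dist x (τ x) + dist (τ x) y) (dist x (τ y) + dist x (τ x))
      ≤ dist x (τ x) + dist x y + dist y (τ y) := max_le (by linarith) (by linarith)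
  linarith

lemma disp_upper {δ : ℝ} (hδ : 0 ≤ δ) (fp : FPd X δ) (τ : X ≃ᵢ X) (x m : X)
    (h1 : dist x m = dist x (τ x) / 2) (h2 : dist m (τ x) = dist x (τ x) / 2) :
    dist m (τ m) ≤ max 0 (dist x (τ (τ x)) - dist x (τ x)) + 2 * δ := by
  have hb : Bt x m (τ x) := by unfold Bt; linarith
  have a1 := fpd_le fp hb (τ m)
  have a2 := fpd_le fp (hb.map τ) x
  have e1 : dist (τ x) (τ m) = dist x m := τ.dist_eq _ _
  have e2 : dist (τ m) (τ (τ x)) = dist m (τ x) := τ.dist_eq _ _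
  rw [e1, h1, h2] at a1
  rw [e1, e2, h1, h2, dist_comm (τ m) x, dist_comm (τ x) x, dist_comm (τ (τ x)) x] at a2
  have m0 := le_max_left 0 (dist x (τ (τ x)) - dist x (τ x))
  have m1 := le_max_right 0 (dist x (τ (τ x)) - dist x (τ x))
  have b2 : dist x (τ m) ≤ max 0 (dist x (τ (τ x)) - dist x (τ x)) + dist x (τ x) / 2 + δ := by
    refine a2.trans ?_
    gcongr
    exact max_le (by linarith) (by linarith)
  refine a1.trans ?_
  have : max (dist x (τ m) - dist x (τ x) / 2) (dist x (τ x) / 2 - dist x (τ x) / 2)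
    ≤ max 0 (dist x (τ (τ x)) - dist x (τ x)) + δ := max_le (by linarith) (by linarith)
  linarith

lemma tl_bounds {δ : ℝ} (hδ : 0 ≤ δ) (fp : FPd X δ) (τ : X ≃ᵢ X) (x m : X)
    (h1 : dist x m = dist x (τ x) / 2) (h2 : dist m (τ x) = dist x (τ x) / 2) :
    |translationLength τ - max 0 (dist x (τ (τ x)) - dist x (τ x))| ≤ 2 * δ := by
  have : Nonempty X := ⟨x⟩
  rw [abs_le]
  constructor
  · have l1 : dist x (τ (τ x)) - dist x (τ x) - δ ≤ translationLength τ :=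
      le_ciInf fun y => by linarith [disp_lower fp τ x y]
    have l2 := tl_nonneg τ
    have : max 0 (dist x (τ (τ x)) - dist x (τ x)) ≤ translationLength τ + δ :=
      max_le (by linarith) (by linarith)
    linarith
  · linarith [tl_le τ m, disp_upper hδ fp τ x m h1 h2]

lemma exists_mid (ip : IP X) (x y : X) : ∃ m, dist x m = dist x y / 2 ∧ dist m y = dist x y / 2 := by
  have := dist_nonneg (x := x) (y := y)
  obtain ⟨m, h1, h2⟩ := ip x y (dist x y / 2) (by linarith) (by linarith)
  exact ⟨m, h1, by linarith⟩

lemma tl_eq (fp : FP X) (ip : IP X) (τ : X ≃ᵢ X) (x : X) :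
    translationLength τ = max 0 (dist x (τ (τ x)) - dist x (τ x)) := by
  obtain ⟨m, h1, h2⟩ := exists_mid ip x (τ x)
  have := tl_bounds le_rfl fp.fpd τ x m h1 h2
  simp only [mul_zero, abs_nonpos_iff] at this
  linarith

lemma mid_core (fp : FP X) (ip : IP X) (τ : X ≃ᵢ X) (x m : X)
    (h1 : dist x m = dist x (τ x) / 2) (h2 : dist m (τ x) = dist x (τ x) / 2) :
    dist m (τ m) = translationLength τ := by
  refine le_antisymm ?_ (tl_le τ m)
  rw [tl_eq fp ip τ x]
  simpa using disp_upper le_rfl fp.fpd τ x m h1 h2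

lemma tl_of_bt (fp : FP X) (ip : IP X) (τ : X ≃ᵢ X) {x : X} (h : Bt x (τ x) (τ (τ x))) :
    translationLength τ = dist x (τ x) := by
  rw [tl_eq fp ip τ x]
  unfold Bt at h
  rw [τ.dist_eq] at h
  rw [← h]; simp

lemma core_bt (fp : FP X) (ip : IP X) (τ : X ≃ᵢ X) (hL : 0 < translationLength τ) {y : X}
    (hy : dist y (τ y) = translationLength τ) : Bt y (τ y) (τ (τ y)) := by
  have h := tl_eq fp ip τ y
  unfold Bt
  rw [τ.dist_eq]
  rcases max_choice 0 (dist y (τ (τ y)) - dist y (τ y)) with h' | h' <;> rw [h'] at h <;> linarith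

/-- branching data -/
def Br (τ : X ≃ᵢ X) (p c : X) : Prop :=
  τ p ≠ p ∧ Bt (τ.symm p) p (τ p) ∧ Bt c p (τ p) ∧ Bt c p (τ.symm p)

lemma Br.fwd {τ : X ≃ᵢ X} {p c : X} (h : Br τ p c) : Bt p (τ p) (τ (τ p)) := by
  simpa using h.2.1.map τ

lemma Br.prop (fp : FP X) {τ : X ≃ᵢ X} {p c q : X} (h : Br τ p c) (hne : c ≠ p) (hb : Bt p c q) :
    Br τ p q :=
  ⟨h.1, h.2.1, bt_cat2 fp hb.symm h.2.2.1 hne, bt_cat2 fp hb.symm h.2.2.2 hne⟩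

lemma br_mul (fp : FP X) (ip : IP X) {g h : X ≃ᵢ X} {p q : X} (hg : Br g p q) (hh : Br h q p)
    (hne : p ≠ q) :
    translationLength (g * h) = translationLength g + translationLength h + 2 * dist p q := by
  rw [tl_of_bt fp ip g hg.fwd, tl_of_bt fp ip h hh.fwd]
  have b1 : Bt p (g p) (g q) := by simpa using hg.2.2.2.symm.map g
  have b2 : Bt (g p) (g q) (g (h q)) := hh.2.2.1.map g
  have b3 : Bt (g q) (g (h q)) (g (h p)) := by simpa using (hh.2.2.2.symm.map h).map g
  have b4 : Bt (g (h q)) (g (h p)) (g (h (g p))) := (hg.2.2.1.map h).map g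
  have n1 : g p ≠ g q := g.injective.ne hne
  have n2 : g q ≠ g (h q) := g.injective.ne hh.1.symm
  have n3 : g (h q) ≠ g (h p) := g.injective.ne (h.injective.ne hne.symm)
  have n4 : g (h p) ≠ g (h (g p)) := g.injective.ne (h.injective.ne hg.1.symm)
  have c1 := bt_cat2 fp b1 b2 n1
  have c2 := bt_cat2 fp c1 b3 n2
  have c3 := bt_cat2 fp c2 b4 n3
  have d1 := bt_cat1 fp b1 b2 n1
  have d2 : Bt p (g p) (g (h p)) := bt_trans1 d1 c2
  have d3 : Bt (g (h p)) (g (h (g p))) (g (h (g (h p)))) := (d2.map h).map g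
  have key : Bt p ((g * h) p) ((g * h) ((g * h) p)) := bt_cat1 fp c3 d3 n4
  rw [tl_of_bt fp ip (g * h) key]
  have e1 : dist p (g q) = dist p (g p) + dist p q := by
    unfold Bt at b1; rw [g.dist_eq] at b1; linarith
  have e2 : dist p (g (h q)) = dist p (g q) + dist q (h q) := by
    unfold Bt at c1; rw [g.dist_eq] at c1; linarith
  have e3 : dist p (g (h p)) = dist p (g (h q)) + dist p q := by
    unfold Bt at c2; rw [g.dist_eq, h.dist_eq, dist_comm q p] at c2; linarith
  have e4 : (g * h) p = g (h p) := rfl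
  rw [e4, e3, e2, e1]; ring

lemma pow_bt (fp : FP X) {τ : X ≃ᵢ X} {p : X} (h : Bt p (τ p) (τ (τ p))) (hne : τ p ≠ p) (n : ℕ) :
    Bt p ((τ ^ n) p) ((τ ^ (n + 1)) p) ∧ dist p ((τ ^ n) p) = n * dist p (τ p) := by
  induction n with
  | zero => simp [Bt]
  | succ n ih =>
    have e1 : (τ ^ (n + 1)) p = (τ ^ n) (τ p) := by rw [pow_succ]; rfl
    have e2 : (τ ^ (n + 1 + 1)) p = (τ ^ n) (τ (τ p)) := by rw [pow_succ, pow_succ]; rfl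
    have hb := h.map (τ ^ n)
    rw [← e1, ← e2] at hb
    have hn : (τ ^ n) p ≠ (τ ^ (n + 1)) p := by
      rw [e1]; exact (τ ^ n).injective.ne hne.symm
    refine ⟨bt_cat2 fp ih.1 hb hn, ?_⟩
    have := ih.1
    unfold Bt at this
    have e3 : dist ((τ ^ n) p) ((τ ^ (n + 1)) p) = dist p (τ p) := by
      rw [e1]; exact (τ ^ n).dist_eq _ _
    push_cast
    rw [← this, e3, ih.2]; ring

lemma zpow_dist (fp : FP X) {τ : X ≃ᵢ X} {p : X} (h : Bt p (τ p) (τ (τ p))) (hne : τ p ≠ p)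
    {m n : ℤ} (hmn : m ≤ n) :
    dist ((τ ^ m) p) ((τ ^ n) p) = ((n : ℝ) - m) * dist p (τ p) := by
  obtain ⟨k, rfl⟩ := Int.exists_add_of_le hmn
  have : (τ ^ (m + (k : ℤ))) p = (τ ^ m) ((τ ^ k) p) := by rw [zpow_add, zpow_natCast]; rfl
  rw [this, (τ ^ m).dist_eq, (pow_bt fp h hne k).2]
  push_cast; ring

lemma straddle (fp : FP X) {τ : X ≃ᵢ X} {p : X} (h : Bt p (τ p) (τ (τ p))) (hne : τ p ≠ p)
    {y : X} {n : ℕ} (hn : dist p y < n * dist p (τ p)) :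
    Bt ((τ ^ (-(n : ℤ))) y) p ((τ ^ (n : ℤ)) y) := by
  have d1 := zpow_dist fp h hne (m := -(n : ℤ)) (n := 0) (by simp)
  have d2 := zpow_dist fp h hne (m := 0) (n := n) (by simp)
  have d3 := zpow_dist fp h hne (m := -(n : ℤ)) (n := n) (by simp)
  simp only [zpow_zero, IsometryEquiv.coe_one, id] at d1 d2
  push_cast at d1 d2 d3
  have b : Bt ((τ ^ (-(n : ℤ))) p) p ((τ ^ (n : ℤ)) p) := by
    unfold Bt; rw [d1, d2, d3]; ring
  have b2 : Bt ((τ ^ (-(n : ℤ))) p) p ((τ ^ (n : ℤ)) y) := by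
    apply bt_stab fp b
    rw [IsometryEquiv.dist_eq, dist_comm _ p, d2]; linarith
  apply Bt.symm
  apply bt_stab fp b2.symm
  rw [IsometryEquiv.dist_eq, d1]; linarith

lemma exists_nat_mul {L : ℝ} (hL : 0 < L) (r : ℝ) : ∃ n : ℕ, r < n * L := by
  obtain ⟨n, hn⟩ := exists_nat_gt (r / L)
  exact ⟨n, (div_lt_iff₀ hL).1 hn⟩

lemma proj (fp : FP X) (ip : IP X) (τ : X ≃ᵢ X) (hL : 0 < translationLength τ) (y : X) :
    ∃ p, dist p (τ p) = translationLength τ ∧ Br τ p y := by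
  obtain ⟨p, c1, c2, c3⟩ := center fp ip (τ.symm y) y (τ y)
  have hf := tl_eq fp ip τ y
  have h1 : dist y (τ (τ y)) - dist y (τ y) = translationLength τ := by
    rcases max_choice 0 (dist y (τ (τ y)) - dist y (τ y)) with h' | h' <;> rw [h'] at hf <;> linarith
  set L := translationLength τ with hLdef
  have e1 : dist (τ.symm y) y = dist y (τ y) := by
    rw [← τ.dist_eq (τ.symm y) y]; simp
  have e2 : dist (τ.symm y) (τ y) = dist y (τ (τ y)) := by
    rw [← τ.dist_eq (τ.symm y) (τ y)]; simp
  have c1' := c1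
  have c2' := c2
  have c3' := c3
  unfold Bt at c1' c2' c3'
  rw [e1] at c1'
  rw [e2] at c2'
  rw [dist_comm p y] at c1'
  have e3 : dist y (τ p) = dist (τ.symm y) p := by
    rw [← τ.dist_eq (τ.symm y) p]; simp
  have e4 : dist (τ.symm y) (τ.symm p) = dist y p := τ.symm.dist_eq _ _
  have e5 : dist y (τ.symm p) = dist (τ y) p := by
    rw [← τ.dist_eq y (τ.symm p)]; simp
  have c4 : Bt y (τ p) (τ y) := by simpa using c1.map τ
  have c5 : Bt (τ.symm y) (τ.symm p) y := by simpa using c3.map τ.symm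
  have b1 : Bt y p (τ p) := bt_pos fp c3 c4 (by rw [e3]; linarith)
  have dp : dist p (τ p) = L := by
    unfold Bt at b1; rw [e3] at b1; linarith
  have b2 : Bt y p (τ.symm p) :=
    bt_pos fp c1.symm c5.symm (by rw [e5, dist_comm (τ y) p]; linarith)
  refine ⟨p, dp, ?_, ?_, b1, b2⟩
  · intro h
    rw [h, dist_self] at dp; linarith
  · apply Bt.of_map τ
    simpa using core_bt fp ip τ hL dp

lemma bridge (fp : FP X) (ip : IP X) (a b : X ≃ᵢ X) (ha : 0 < translationLength a)
    (hb : 0 < translationLength b) (hd : Disjoint (isomCore a) (isomCore b))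
    (hne : Nonempty X) : ∃ p q, p ≠ q ∧ Br a p q ∧ Br b q p := by
  obtain ⟨y0⟩ := hne
  obtain ⟨y, hy, -⟩ := proj fp ip b hb y0
  obtain ⟨p, hp, hp'⟩ := proj fp ip a ha y
  obtain ⟨q, hq, hq'⟩ := proj fp ip b hb p
  have hpq : p ≠ q := by
    rintro rfl
    exact Set.disjoint_left.1 hd hp hq
  have key : Bt p q y := by
    by_contra hn
    have k1 := bt_dir fp hq'.2.2.1 hn
    have k2 := bt_dir fp hq'.2.2.2 hn
    have k3 : Bt (b y) (b q) q := by simpa using k2.map b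
    have k4 := bt_cat fp k1 k3.symm hq'.1.symm
    rw [hy, hq, b.dist_eq, dist_comm q y] at k4
    have : y = q := dist_le_zero.1 (by linarith)
    exact hn (this ▸ bt_right p y)
  exact ⟨p, q, hpq, ⟨hp'.1, hp'.2.1, bt_trans2 key.symm hp'.2.2.1, bt_trans2 key.symm hp'.2.2.2⟩, hq'⟩

lemma serre (fp : FP X) (ip : IP X) (s t : X ≃ᵢ X) (x m : X) (hb : Bt x m (s x)) (hsm : s m = m)
    (ht : translationLength t = 0) (hst : translationLength (s * t) = 0)
    (hle : dist x (t x) ≤ dist x (s x)) : t m = m := by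
  by_contra hne
  obtain ⟨n, n1, n2⟩ := exists_mid ip m (t m)
  have htn : t n = n := by
    have := mid_core fp ip t m n n1 n2
    rw [ht] at this
    exact (dist_eq_zero.1 this).symm
  have hmn : Bt m n (t m) := by unfold Bt; linarith
  have hpos : 0 < dist m (t m) := dist_pos.2 (Ne.symm hne)
  have nm : m ≠ n := by
    rintro rfl
    exact hne htn
  have hxs : dist x (s x) = 2 * dist x m := by
    unfold Bt at hb
    have : dist m (s x) = dist x m := by
      rw [← s.dist_eq x m, hsm, dist_comm]
    linarith
  by_cases h : Bt x m n
  · have h1 := bt_cat2 fp h hmn nm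
    have h2 : Bt n (t m) (t x) := by simpa [htn] using h.symm.map t
    have hn' : n ≠ t m := by
      intro e; rw [← htn] at e
      exact nm (t.injective e).symm
    have h3 := bt_cat fp h1 h2 hn'
    rw [t.dist_eq, dist_comm m x] at h3
    unfold Bt at h
    have := dist_pos.2 nm
    linarith
  · have h1 := bt_dir fp hb h
    have h2 : ¬ Bt (s x) m (s n) := by
      intro h'
      apply h
      apply Bt.of_map s
      rwa [hsm]
    have h3 : Bt n m (s n) := (bt_dir fp h1.symm h2).symm
    have h4 : Bt m (s n) (s (t m)) := by simpa [hsm] using hmn.map s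
    have h5 : Bt (s n) (s (t m)) (s (t (s n))) := by simpa [htn] using (h3.map t).map s
    have k1 : m ≠ s n := by
      intro e; nth_rewrite 1 [← hsm] at e
      exact nm (s.injective e)
    have k2 : s n ≠ s (t m) := by
      intro e; nth_rewrite 1 [← htn] at e
      exact nm (t.injective (s.injective e)).symm
    have g1 := bt_cat2 fp h3 h4 k1
    have g2 := bt_cat fp g1 h5 k2
    rw [tl_eq fp ip (s * t) n] at hst
    have e1 : (s * t) n = s n := by
      show s (t n) = s n
      rw [htn]
    have e2 : (s * t) ((s * t) n) = s (t (s n)) := by rw [e1]; rfl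
    rw [e2, e1, g2] at hst
    have := le_max_right 0 (dist n (s n) + dist (s n) (s (t m)) + dist (s (t m)) (s (t (s n)))
      - dist n (s n))
    rw [hst] at this
    have p1 := dist_pos.2 k2
    have p2 := dist_nonneg (x := s (t m)) (y := s (t (s n)))
    linarith

lemma hyp_of_pos (fp : FP X) (ip : IP X) (τ : X ≃ᵢ X) (hL : 0 < translationLength τ)
    (hne : Nonempty X) : IsHyperbolicIsom τ := by
  refine ⟨hL, ?_⟩
  obtain ⟨y0⟩ := hne
  obtain ⟨p, hp, hbr⟩ := proj fp ip τ hL y0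
  have hbt := core_bt fp ip τ hL hp
  have hpn := hbr.1
  obtain ⟨γ, g0, g1, g2⟩ := exists_geod fp ip p (τ p)
  set L := translationLength τ with hLdef
  rw [hp] at g1 g2
  have zd : ∀ m n : ℤ, m ≤ n → dist ((τ ^ m) p) ((τ ^ n) p) = ((n : ℝ) - m) * L := by
    intro m n h
    rw [zpow_dist fp hbt hpn h, hp]
  have zs : ∀ (m : ℤ) (z : X), (τ ^ (m + 1)) z = (τ ^ m) (τ z) := by
    intro m z; rw [zpow_add_one]; rfl
  let u : ℝ → ℝ := fun s => s - L * ⌊s / L⌋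
  let e : ℝ → X := fun s => (τ ^ ⌊s / L⌋) (γ (u s))
  have hu0 : ∀ s, 0 ≤ u s := by
    intro s
    have := Int.floor_le (s / L)
    have := (le_div_iff₀ hL).1 this
    simp only [u]; linarith
  have hu1 : ∀ s, u s < L := by
    intro s
    have := Int.lt_floor_add_one (s / L)
    have := (div_lt_iff₀ hL).1 this
    simp only [u]; linarith
  have hus : ∀ s, s = u s + L * ⌊s / L⌋ := by intro s; simp [u]
  have m0 : (0 : ℝ) ∈ Set.Icc 0 L := ⟨le_rfl, hL.le⟩
  have m1 : L ∈ Set.Icc 0 L := ⟨hL.le, le_rfl⟩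
  have mu : ∀ s, u s ∈ Set.Icc 0 L := fun s => ⟨hu0 s, (hu1 s).le⟩
  have dl : ∀ s, dist ((τ ^ ⌊s / L⌋) p) (e s) = u s := by
    intro s
    simp only [e]
    rw [IsometryEquiv.dist_eq]
    nth_rewrite 1 [← g0]
    rw [g2 0 m0 _ (mu s), abs_of_nonpos (by linarith [hu0 s])]; ring
  have dr : ∀ s, dist (e s) ((τ ^ (⌊s / L⌋ + 1)) p) = L - u s := by
    intro s
    simp only [e]
    rw [zs, IsometryEquiv.dist_eq]
    nth_rewrite 1 [← g1]
    rw [g2 _ (mu s) _ m1, abs_of_nonpos (by linarith [hu1 s])]; ring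
  have mono : ∀ s t, s ≤ t → dist (e s) (e t) = t - s := by
    intro s t hst
    have hfl : ⌊s / L⌋ ≤ ⌊t / L⌋ := Int.floor_le_floor (by gcongr)
    rcases eq_or_lt_of_le hfl with he | hlt
    · have h1 := hus s
      have h2 := hus t
      rw [he] at h1
      simp only [e]
      rw [he, IsometryEquiv.dist_eq, g2 _ (mu s) _ (mu t), abs_of_nonpos (by linarith)]
      linarith
    · have h1 := hus s
      have h2 := hus t
      have a1 := dl s
      have a2 := dr s
      have a3 := dl t
      have a4 := dr t
      have b1 := zd ⌊s / L⌋ (⌊t / L⌋ + 1) (by omega)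
      have b2 := zd (⌊s / L⌋ + 1) ⌊t / L⌋ (by omega)
      push_cast at b1 b2
      apply le_antisymm
      · have t1 := dist_triangle4 (e s) ((τ ^ (⌊s / L⌋ + 1)) p) ((τ ^ ⌊t / L⌋) p) (e t)
        nlinarith
      · have t1 := dist_triangle4 ((τ ^ ⌊s / L⌋) p) (e s) (e t) ((τ ^ (⌊t / L⌋ + 1)) p)
        nlinarith
  have iso : ∀ s t, dist (e s) (e t) = |s - t| := by
    intro s t
    rcases le_total s t with h | h
    · rw [mono s t h, abs_of_nonpos (by linarith)]; ring
    · rw [dist_comm, mono t s h, abs_of_nonneg (by linarith)]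
  have ez : ∀ n : ℤ, e (n * L) = (τ ^ n) p := by
    intro n
    have h1 : (n : ℝ) * L / L = n := by field_simp
    have h2 : u (n * L) = 0 := by
      simp only [u]; rw [h1, Int.floor_intCast]; ring
    simp only [e]
    rw [h2, h1, Int.floor_intCast, g0]
  refine ⟨e, iso, ?_⟩
  ext y
  constructor
  · rintro ⟨s, rfl⟩
    have hs : e (s + L) = τ (e s) := by
      have h1 : (s + L) / L = s / L + 1 := by field_simp
      have h2 : u (s + L) = u s := by
        simp only [u]; rw [h1, Int.floor_add_one]; push_cast; ring
      simp only [e]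
      rw [h2, h1, Int.floor_add_one, add_comm, zpow_one_add]; rfl
    show dist (e s) (τ (e s)) = L
    rw [← hs, mono s (s + L) (by linarith)]; ring
  · intro hy
    have hy' : dist y (τ y) = L := hy
    obtain ⟨n, hn⟩ := exists_nat_mul hL (dist y p)
    have hyn : τ y ≠ y := by
      intro h; rw [h, dist_self] at hy'; linarith
    have st := straddle fp (core_bt fp ip τ hL hy') hyn (y := p) (n := n) (by rw [hy']; exact hn)
    rw [← ez, ← ez] at st
    have st' := st
    unfold Bt at st'
    set r := dist (e (((-(n : ℤ) : ℤ) : ℝ) * L)) y with hr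
    have hnn : (0 : ℝ) ≤ n * L := by positivity
    rw [mono _ ((((n : ℤ) : ℤ) : ℝ) * L) (by push_cast; linarith)] at st'
    push_cast at st'
    have r0 : 0 ≤ r := dist_nonneg
    have r1 := dist_nonneg (x := y) (y := e ((((n : ℤ) : ℤ) : ℝ) * L))
    push_cast at r1
    refine ⟨((-(n : ℤ) : ℤ) : ℝ) * L + r, ?_⟩
    have k1 := mono (((-(n : ℤ) : ℤ) : ℝ) * L) (((-(n : ℤ) : ℤ) : ℝ) * L + r) (by linarith)
    have k2 := mono (((-(n : ℤ) : ℤ) : ℝ) * L + r) ((((n : ℤ) : ℤ) : ℝ) * L)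
      (by push_cast; linarith)
    have k3 := mono (((-(n : ℤ) : ℤ) : ℝ) * L) ((((n : ℤ) : ℤ) : ℝ) * L)
      (by push_cast; linarith)
    refine bt_uniq fp (a := e (((-(n : ℤ) : ℤ) : ℝ) * L)) (b := e ((((n : ℤ) : ℤ) : ℝ) * L)) ?_ st ?_
    · unfold Bt; rw [k1, k2, k3]; ring
    · rw [k1]; ring

end Isom

end LL

namespace LL

section Simplicial

/-- geodesic facts -/
lemma geod_dist {X : Type*} [MetricSpace X] {γ : ℝ → X} {a b : X} (h : IsGeodesicSegment γ a b)
    {s : ℝ} (hs : s ∈ Set.Icc 0 (dist a b)) :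
    dist a (γ s) = s ∧ dist (γ s) b = dist a b - s := by
  obtain ⟨g0, g1, g2⟩ := h
  have a1 := g2 0 ⟨le_rfl, dist_nonneg⟩ s hs
  have a2 := g2 s hs (dist a b) ⟨dist_nonneg, le_rfl⟩
  rw [g0, abs_of_nonpos (by linarith [hs.1])] at a1
  rw [g1, abs_of_nonpos (by linarith [hs.2])] at a2
  constructor <;> linarith

lemma simplicial {X : Type*} [MetricSpace X] (fp : FP X) (ip : IP X) (v0 : X)
    (hB : ∀ x y c : X, Bt v0 c x → Bt v0 c y → Bt x c y → c ≠ x → c ≠ y →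
      ∃ k : ℤ, 4 * dist v0 c = k)
    (hE : ∀ x : X, x ≠ v0 → ∀ T : ℝ, ∃ y, Bt v0 x y ∧ T ≤ dist v0 y) :
    IsMetricSimplicialTree X := by
  refine ⟨isRTree fp ip, {w | ∃ k : ℤ, 4 * dist v0 w = k}, ?_, ?_, ?_⟩
  · have h1 : IsClosed (Set.range ((↑) : ℤ → ℝ)) := Int.isClosedEmbedding_coe_real.isClosed_range
    have h2 : Continuous fun w : X => 4 * dist v0 w := by fun_prop
    have : {w : X | ∃ k : ℤ, 4 * dist v0 w = k} = (fun w : X => 4 * dist v0 w) ⁻¹'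
        (Set.range ((↑) : ℤ → ℝ)) := by
      ext w; simp [eq_comm]
    rw [this]
    exact h1.preimage h2
  · rintro v ⟨k, hk⟩
    refine ⟨1 / 4, by norm_num, ?_⟩
    rintro w ⟨l, hl⟩ hvw
    obtain ⟨c, c1, c2, c3⟩ := center fp ip v0 v w
    have hc : ∃ j : ℤ, 4 * dist v0 c = j := by
      by_cases e1 : c = v
      · exact ⟨k, e1 ▸ hk⟩
      by_cases e2 : c = w
      · exact ⟨l, e2 ▸ hl⟩
      exact hB v w c c1 c2 c3 e1 e2
    obtain ⟨j, hj⟩ := hc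
    unfold Bt at c1 c2 c3
    rw [dist_comm v c] at c3
    have hd : 4 * dist v w = ((k + l - 2 * j : ℤ) : ℝ) := by
      push_cast; linarith
    have hlt : ((k + l - 2 * j : ℤ) : ℝ) < 1 := by rw [← hd]; linarith
    have hlt' : k + l - 2 * j < 1 := by exact_mod_cast hlt
    have hle : ((k + l - 2 * j : ℤ) : ℝ) ≤ 0 := by exact_mod_cast (by omega : k + l - 2 * j ≤ 0)
    rw [← hd] at hle
    exact (dist_le_zero.1 (by linarith)).symm
  · intro x hx
    set V : Set X := {w | ∃ k : ℤ, 4 * dist v0 w = k} with hV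
    have hx0 : x ≠ v0 := by
      rintro rfl
      exact hx ⟨0, by simp⟩
    set k : ℤ := ⌊4 * dist v0 x⌋ with hk
    have k1 : (k : ℝ) < 4 * dist v0 x := lt_of_le_of_ne (Int.floor_le _) (fun e => hx ⟨k, e.symm⟩)
    have k2 : 4 * dist v0 x < k + 1 := Int.lt_floor_add_one _
    have k0 : (0 : ℝ) ≤ k := by
      have : 0 ≤ k := Int.floor_nonneg.2 (by positivity)
      exact_mod_cast this
    obtain ⟨y, y1, y2⟩ := hE x hx0 ((k + 1) / 4)
    obtain ⟨γ, hγ⟩ := exists_geod fp ip v0 y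
    have hiso := hγ.2.2
    have hγb : ∀ s ∈ Set.Icc 0 (dist v0 y), Bt v0 (γ s) y := by
      intro s hs
      have := geod_dist hγ hs
      unfold Bt; linarith
    have hγeq : ∀ z, Bt v0 z y → z = γ (dist v0 z) := by
      intro z hz
      have hm : dist v0 z ∈ Set.Icc 0 (dist v0 y) := by
        refine ⟨dist_nonneg, ?_⟩
        unfold Bt at hz
        linarith [dist_nonneg (x := z) (y := y)]
      exact bt_uniq fp hz (hγb _ hm) (geod_dist hγ hm).1.symm
    have hmem : ∀ s ∈ Set.Icc (0 : ℝ) (1 / 4), (k : ℝ) / 4 + s ∈ Set.Icc 0 (dist v0 y) := by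
      intro s hs
      exact ⟨by linarith [hs.1], by linarith [hs.2]⟩
    have hfiso : ∀ s ∈ Set.Icc (0 : ℝ) (1 / 4), ∀ t ∈ Set.Icc (0 : ℝ) (1 / 4),
        dist (γ (k / 4 + s)) (γ (k / 4 + t)) = |s - t| := by
      intro s hs t ht
      rw [hiso _ (hmem s hs) _ (hmem t ht)]
      congr 1; ring
    have hfd : ∀ s ∈ Set.Icc (0 : ℝ) (1 / 4), dist v0 (γ (k / 4 + s)) = k / 4 + s :=
      fun s hs => (geod_dist hγ (hmem s hs)).1
    refine ⟨1 / 4, by norm_num, fun s => γ (k / 4 + s), hfiso, ?_, ?_, ?_⟩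
    · apply Set.Subset.antisymm
      · apply IsPreconnected.subset_connectedComponentIn
        · apply isPreconnected_Ioo.image
          refine LipschitzOnWith.continuousOn (K := 1) ?_
          apply LipschitzOnWith.of_dist_le_mul
          intro s hs t ht
          rw [hfiso s (Set.Ioo_subset_Icc_self hs) t (Set.Ioo_subset_Icc_self ht), Real.dist_eq]
          simp
        · refine ⟨dist v0 x - k / 4, ⟨by linarith, by linarith⟩, ?_⟩
          show γ (k / 4 + (dist v0 x - k / 4)) = x
          rw [add_sub_cancel]; exact (hγeq x y1).symm
        · rintro _ ⟨s, hs, rfl⟩ ⟨j, hj⟩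
          rw [hfd s (Set.Ioo_subset_Icc_self hs)] at hj
          have h1 : (k : ℝ) < j := by linarith [hs.1]
          have h2 : (j : ℝ) < k + 1 := by linarith [hs.2]
          have h1' : k < j := by exact_mod_cast h1
          have h2' : j < k + 1 := by exact_mod_cast h2
          omega
      · intro z hz
        set C := connectedComponentIn Vᶜ x with hC
        have hCc : IsPreconnected C := isPreconnected_connectedComponentIn
        have hxC : x ∈ C := mem_connectedComponentIn hx
        have hCV : ∀ w ∈ C, w ∉ V := fun w hw => connectedComponentIn_subset _ _ hw
        have cvx : ∀ w, Bt x w z → w ∈ C := fun w hw => conn_convex fp hCc hxC hz hw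
        have fin : Bt v0 z y → k < 4 * dist v0 z → 4 * dist v0 z < k + 1 →
            z ∈ (fun s => γ (k / 4 + s)) '' Set.Ioo 0 (1 / 4) := by
          intro h1 h2 h3
          refine ⟨dist v0 z - k / 4, ⟨by linarith, by linarith⟩, ?_⟩
          have := hγeq z h1
          show γ (k / 4 + (dist v0 z - k / 4)) = z
          rw [add_sub_cancel]; exact this.symm
        obtain ⟨c, c1, c2, c3⟩ := center fp ip v0 x z
        have hcC := cvx c c3
        have hc : c = x ∨ c = z := by
          by_contra hn
          push Not at hn
          exact hCV c hcC (hB x z c c1 c2 c3 hn.1 hn.2)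
        rcases hc with rfl | rfl
        · -- x between v0 and z
          have c2' := c2
          unfold Bt at c2'
          have hzlt : 4 * dist v0 z < k + 1 := by
            by_contra hge
            push Not at hge
            obtain ⟨w, w1, w2⟩ := ip v0 z ((k + 1) / 4) (by linarith) (by linarith)
            have hw : Bt v0 w z := by unfold Bt; linarith
            have hcw : Bt v0 c w := bt_pos fp c2 hw (by linarith)
            have : w ∈ C := cvx w (bt_trans2 hcw hw)
            exact hCV w this ⟨k + 1, by rw [w1]; push_cast; ring⟩
          obtain ⟨d, d1, d2, d3⟩ := center fp ip v0 z y
          have hdC : d ∈ C := by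
            apply cvx
            have hle : dist v0 c ≤ dist v0 d := by
              have t1 := dist_triangle z c y
              unfold Bt at d1 d2 d3 y1
              rw [dist_comm z c] at t1
              rw [dist_comm z d] at d3
              linarith
            exact bt_trans2 (bt_pos fp c2 d1 hle) d1
          have hd : d = z ∨ d = y := by
            by_contra hn
            push Not at hn
            exact hCV d hdC (hB z y d d1 d2 d3 hn.1 hn.2)
          rcases hd with rfl | rfl
          · exact fin d2 (by linarith [dist_nonneg (x := c) (y := d)]) hzlt
          · unfold Bt at d1
            linarith [dist_nonneg (x := d) (y := z)]
        · -- z between v0 and x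
          have c1' := c1
          unfold Bt at c1'
          refine fin (bt_trans1 c1 y1) ?_ (by linarith [dist_nonneg (x := c) (y := x)])
          by_contra hge
          push Not at hge
          obtain ⟨w, w1, w2⟩ := ip v0 x (k / 4) (by linarith) (by linarith)
          have hw : Bt v0 w x := by unfold Bt; linarith
          have hcw : Bt v0 c w := bt_pos fp c1 hw (by linarith)
          have : w ∈ C := cvx w (bt_trans2 hcw hw).symm
          exact hCV w this ⟨k, by rw [w1]; ring⟩
    · refine ⟨k, ?_⟩
      have := hfd 0 ⟨le_rfl, by norm_num⟩
      show 4 * dist v0 (γ (k / 4 + 0)) = k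
      rw [this]; ring
    · refine ⟨k + 1, ?_⟩
      have := hfd (1 / 4) ⟨by norm_num, le_rfl⟩
      show 4 * dist v0 (γ (k / 4 + 1 / 4)) = _
      rw [this]; push_cast; ring

end Simplicial

section Minimal

variable {X : Type*} [MetricSpace X] {G : Type*} [Group G]

lemma Br.conj {τ : X ≃ᵢ X} {p c : X} (h : Br τ p c) (k : X ≃ᵢ X) :
    Br (k * τ * k⁻¹) (k p) (k c) := by
  have e1 : (k * τ * k⁻¹) (k p) = k (τ p) := by
    show k (τ (k.symm (k p))) = _
    simp
  have e2 : (k * τ * k⁻¹).symm (k p) = k (τ.symm p) := by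
    apply (k * τ * k⁻¹).injective
    rw [IsometryEquiv.apply_symm_apply]
    show _ = k (τ (k.symm (k (τ.symm p))))
    simp
  unfold Br
  rw [e1, e2]
  exact ⟨k.injective.ne h.1, h.2.1.map k, h.2.2.1.map k, h.2.2.2.map k⟩

lemma Br.inv {τ : X ≃ᵢ X} {p c : X} (h : Br τ p c) : Br τ⁻¹ p c := by
  have e1 : (τ⁻¹ : X ≃ᵢ X) p = τ.symm p := rfl
  have e2 : (τ⁻¹ : X ≃ᵢ X).symm p = τ p := rfl
  unfold Br
  rw [e1, e2]
  refine ⟨fun e => h.1 ?_, h.2.1.symm, h.2.2.2, h.2.2.1⟩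
  nth_rewrite 1 [← e]; simp

/-- Main dichotomy: in the direction of `x` at `c`. -/
lemma branch_dir (fp : FP X) {a b : X ≃ᵢ X} {p q c x : X} (ha : Br a p q) (hb : Br b q p)
    (hpq : p ≠ q) (hcp : ¬ Bt x c p) :
    ∃ g p', (g = a ∨ g = a⁻¹ * b * a ∨ g = a * b * a⁻¹) ∧ Br g p' c ∧ p' ≠ c ∧ ¬ Bt x c p' := by
  have hpc : p ≠ c := fun e => hcp (e ▸ bt_right x p)
  -- half case
  have half : ∀ a' : X ≃ᵢ X, Br a' p q → ¬ Bt c p (a' p) →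
      ∃ p', Br (a'⁻¹ * b * a') p' c ∧ p' ≠ c ∧ ¬ Bt x c p' := by
    intro a' ha' hn
    have h1 : Bt (a'.symm p) p c := by
      by_contra h
      exact hn (bt_dir fp ha'.2.1 (fun h' => h h')) 
    have hne : a'.symm p ≠ p := by
      intro e; apply ha'.1; nth_rewrite 1 [← e]; simp
    have h2 : Bt (a'.symm q) (a'.symm p) p := by
      simpa using ha'.2.2.1.map a'.symm
    have h3 := bt_cat1 fp h2 h1 hne
    have h4 := bt_cat2 fp h2 h1 hne
    have hB := hb.conj a'⁻¹
    have e1 : (a'⁻¹ : X ≃ᵢ X) q = a'.symm q := rfl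
    have e2 : (a'⁻¹ : X ≃ᵢ X) p = a'.symm p := rfl
    rw [e1, e2, inv_inv] at hB
    refine ⟨a'.symm q, hB.prop fp (a'.symm.injective.ne hpq) h3, ?_, ?_⟩
    · intro e
      rw [e] at h4
      exact hpc (bt_self h4).symm
    · intro h
      have h5 := bt_dir fp h hcp
      exact hpc (by
        unfold Bt at h4 h5
        rw [dist_comm p c] at h5
        rw [dist_comm (a'.symm q) c, dist_comm p c, dist_comm (a'.symm q) p] at h4
        have := dist_nonneg (x := c) (y := p)
        exact (dist_le_zero.1 (by linarith)).symm)
  by_cases h1 : Bt c p (a p)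
  · by_cases h2 : Bt c p (a.symm p)
    · exact ⟨a, p, Or.inl rfl, ⟨ha.1, ha.2.1, h1, h2⟩, hpc, hcp⟩
    · obtain ⟨p', hp'⟩ := half a⁻¹ ha.inv h2
      rw [inv_inv] at hp'
      exact ⟨_, p', Or.inr (Or.inr rfl), hp'⟩
  · obtain ⟨p', hp'⟩ := half a ha h1
    exact ⟨_, p', Or.inr (Or.inl rfl), hp'⟩

theorem minimal (fp : FP X) (ip : IP X) (σ : G →* (X ≃ᵢ X)) (a b : G)
    (ha : 0 < translationLength (σ a)) (hb : 0 < translationLength (σ b))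
    (hd : Disjoint (isomCore (σ a)) (isomCore (σ b))) (hne : Nonempty X)
    (hint : ∀ g : G, ∃ k : ℤ, translationLength (σ g) = (k : ℝ)) :
    ∃ W : Set X, IsConnected W ∧ (∀ g : G, σ g '' W = W) ∧
      (∀ W' : Set X, IsConnected W' → (∀ g : G, σ g '' W' = W') → W ⊆ W') ∧
      IsMetricSimplicialTree ↥W ∧
      (∀ g : G, (⨅ z : W, dist (z : X) (σ g (z : X))) = translationLength (σ g)) := by
  obtain ⟨p, q, hpq, hap, hbq⟩ := bridge fp ip (σ a) (σ b) ha hb hd hne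
  -- the minimal subtree
  let W : Set X := {z | ∀ C : Set X, Cvx C → (∀ k : G, σ k p ∈ C) → z ∈ C}
  have hWO : ∀ k : G, σ k p ∈ W := fun k C _ h => h k
  have hpW : p ∈ W := by simpa using hWO 1
  have hWc : Cvx W := fun u hu v hv w hw C hC hO => hC u (hu C hC hO) v (hv C hC hO) w hw
  have mulapp : ∀ (g h : G) (z : X), σ (g * h) z = σ g (σ h z) := by
    intro g h z; rw [map_mul]; rfl
  have invapp : ∀ (g : G) (z : X), σ g (σ g⁻¹ z) = z := by
    intro g z; rw [← mulapp]; simp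
  have hWi : ∀ (g : G), ∀ z ∈ W, σ g z ∈ W := by
    intro g z hz C hC hO
    refine hz (σ g ⁻¹' C) ?_ ?_
    · intro u hu v hv w hw
      exact hC _ hu _ hv _ (hw.map _)
    · intro k
      show σ g (σ k p) ∈ C
      rw [← mulapp]; exact hO _
  -- Lemma A
  have lemA : ∀ c x : X, x ∈ W → c ≠ x → ∃ (g : G) (p' : X), Br (σ g) p' c ∧ p' ≠ c ∧ ¬ Bt x c p' := by
    intro c x hx hcx
    have : ∃ k : G, ¬ Bt x c (σ k p) := by
      by_contra hn
      push Not at hn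
      exact hcx (bt_self (hx _ (cvx_bt fp x c) hn)).symm
    obtain ⟨k, hk⟩ := this
    obtain ⟨g, p', hg, h1, h2⟩ := branch_dir fp (hap.conj (σ k)) (hbq.conj (σ k))
      ((σ k).injective.ne hpq) hk
    have hgr : ∃ g' : G, σ g' = g := by
      rcases hg with rfl | rfl | rfl
      · exact ⟨k * a * k⁻¹, by simp⟩
      · exact ⟨(k * a * k⁻¹)⁻¹ * (k * b * k⁻¹) * (k * a * k⁻¹), by simp⟩
      · exact ⟨(k * a * k⁻¹) * (k * b * k⁻¹) * (k * a * k⁻¹)⁻¹, by simp⟩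
    obtain ⟨g', rfl⟩ := hgr
    exact ⟨g', p', h1, h2⟩
  have hqW : q ∈ W := by
    refine hWc p hpW (σ b p) (hWO b) q ?_
    have h1 : Bt q (σ b q) (σ b p) := by simpa using hbq.2.2.2.symm.map (σ b)
    exact bt_cat1 fp hbq.2.2.1 h1 hbq.1.symm
  have hapW : σ a p ∈ W := hWO a
  have hap' : (σ a).symm p ∈ W := by
    have := hWO a⁻¹
    rwa [map_inv] at this
  have hasne : (σ a).symm p ≠ p := by
    intro e; apply hap.1; nth_rewrite 1 [← e]; simp
  -- two directions at p away from c
  have two : ∀ c : X, ∃ z1 ∈ W, ∃ z2 ∈ W, z1 ≠ p ∧ z2 ≠ p ∧ Bt z1 p z2 ∧ Bt z1 p c ∧ Bt z2 p c := by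
    intro c
    by_cases h1 : Bt (σ a p) p c
    · by_cases h2 : Bt q p c
      · exact ⟨_, hapW, q, hqW, hap.1, hpq.symm, hap.2.2.1.symm, h1, h2⟩
      · refine ⟨_, hapW, _, hap', hap.1, hasne, hap.2.1.symm, h1, ?_⟩
        exact (bt_dir fp hap.2.2.2 h2).symm
    · refine ⟨q, hqW, _, hap', hpq.symm, hasne, hap.2.2.2, ?_, ?_⟩
      · exact (bt_dir fp hap.2.2.1.symm h1).symm
      · exact (bt_dir fp hap.2.1.symm h1).symm
  have hB : ∀ x ∈ W, ∀ y ∈ W, ∀ c, Bt p c x → Bt p c y → Bt x c y → c ≠ x → c ≠ y →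
      ∃ k : ℤ, 4 * dist p c = k := by
    intro x hx y hy c c1 c2 c3 hcx hcy
    by_cases hcp : c = p
    · exact ⟨0, by simp [hcp]⟩
    obtain ⟨z1, hz1, z2, hz2, zn1, zn2, zb, zc1, zc2⟩ := two c
    obtain ⟨g1, p1, br1, pn1, pd1⟩ := lemA c x hx hcx
    obtain ⟨g2, p2, br2, pn2, pd2⟩ := lemA c y hy hcy
    obtain ⟨h1, q1, bs1, qn1, qd1⟩ := lemA p z1 hz1 zn1.symm
    obtain ⟨h2, q2, bs2, qn2, qd2⟩ := lemA p z2 hz2 zn2.symm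
    have A1 : Bt p1 c p := bt_dir fp c1.symm pd1
    have A2 : Bt p2 c p := bt_dir fp c2.symm pd2
    have A3 : Bt p1 c p2 := (bt_dir fp (bt_dir fp c3 pd1).symm pd2).symm
    have B1 : Bt q1 p c := bt_dir fp zc1 qd1
    have B2 : Bt q2 p c := bt_dir fp zc2 qd2
    have B3 : Bt q1 p q2 := (bt_dir fp (bt_dir fp zb qd1).symm qd2).symm
    have mulf : ∀ (u v : G) (s t : X), Br (σ u) s t → Br (σ v) t s → s ≠ t →
        translationLength (σ (u * v)) = translationLength (σ u) + translationLength (σ v)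
          + 2 * dist s t := by
      intro u v s t hu hv hst
      rw [map_mul]; exact br_mul fp ip hu hv hst
    have nf : ∀ {s m t : X}, s ≠ m → Bt s m t → s ≠ t := by
      rintro s m t hsm hb rfl
      exact hsm (bt_self hb)
    have D1 := bt_cat fp A1 B1.symm hcp
    have D2 := bt_cat fp A2 B2.symm hcp
    have C1 : Bt p1 c q1 := bt_cat1 fp A1 B1.symm hcp
    have C1' : Bt p1 p q1 := bt_cat2 fp A1 B1.symm hcp
    have C2 : Bt p2 c q2 := bt_cat1 fp A2 B2.symm hcp
    have C2' : Bt p2 p q2 := bt_cat2 fp A2 B2.symm hcp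
    have F1 := mulf g1 g2 p1 p2 (br1.prop fp pn1.symm A3) (br2.prop fp pn2.symm A3.symm) (nf pn1 A3)
    have F2 := mulf h1 h2 q1 q2 (bs1.prop fp qn1.symm B3) (bs2.prop fp qn2.symm B3.symm) (nf qn1 B3)
    have F3 := mulf g1 h1 p1 q1 (br1.prop fp pn1.symm C1) (bs1.prop fp qn1.symm C1'.symm) (nf pn1 C1)
    have F4 := mulf g2 h2 p2 q2 (br2.prop fp pn2.symm C2) (bs2.prop fp qn2.symm C2'.symm) (nf pn2 C2)
    obtain ⟨k1, hk1⟩ := hint (g1 * g2)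
    obtain ⟨k2, hk2⟩ := hint (h1 * h2)
    obtain ⟨k3, hk3⟩ := hint (g1 * h1)
    obtain ⟨k4, hk4⟩ := hint (g2 * h2)
    refine ⟨k3 + k4 - k1 - k2, ?_⟩
    push_cast
    rw [← hk1, ← hk2, ← hk3, ← hk4, F1, F2, F3, F4, D1, D2]
    unfold Bt at A3 B3
    rw [← A3, ← B3, dist_comm c p2, dist_comm q1 p, dist_comm c p]
    ring
  have hE : ∀ x ∈ W, x ≠ p → ∀ T : ℝ, ∃ y ∈ W, Bt p x y ∧ T ≤ dist p y := by
    intro x hx hxp T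
    have : ∃ k : G, Bt p x (σ k p) := by
      by_contra hn
      push Not at hn
      exact hx _ (cvx_not fp p x) hn (bt_right p x)
    obtain ⟨k, hk⟩ := this
    have hbr := hap.conj (σ k)
    have hgr : σ k * σ a * (σ k)⁻¹ = σ (k * a * k⁻¹) := by simp
    rw [hgr] at hbr
    set τ := k * a * k⁻¹ with hτ
    set u := σ k p with hu
    have hfw := hbr.fwd
    have hL : 0 < dist u (σ τ u) := dist_pos.2 hbr.1.symm
    obtain ⟨n, hn⟩ := exists_nat_mul hL (max T 0)
    have hT : T < n * dist u (σ τ u) := lt_of_le_of_lt (le_max_left _ _) hn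
    have h0 : 0 < n * dist u (σ τ u) := lt_of_le_of_lt (le_max_right _ _) hn
    have hst := straddle fp hfw hbr.1 (y := u) (n := n) (by rwa [dist_self])
    have d1 := zpow_dist fp hfw hbr.1 (m := -(n : ℤ)) (n := 0) (by simp)
    have d2 := zpow_dist fp hfw hbr.1 (m := 0) (n := n) (by simp)
    simp only [zpow_zero, IsometryEquiv.coe_one, id] at d1 d2
    push_cast at d1 d2
    have huW : u ∈ W := hWO k
    have inW : ∀ z : ℤ, ((σ τ) ^ z) u ∈ W := by
      intro z; rw [← map_zpow]; exact hWi _ _ huW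
    rcases bt_cases fp hst p with h | h
    · refine ⟨_, inW (-(n : ℤ)), bt_trans1 hk h.symm, ?_⟩
      have := h.symm
      unfold Bt at this
      rw [dist_comm u, d1] at this
      linarith [dist_nonneg (x := p) (y := u)]
    · refine ⟨_, inW n, bt_trans1 hk h.symm, ?_⟩
      have := h.symm
      unfold Bt at this
      rw [d2] at this
      linarith [dist_nonneg (x := p) (y := u)]
  have fpW : FP W := fun x y z w => fp x y z w
  have ipW : IP W := by
    intro u v s hs0 hs1
    obtain ⟨r, r1, r2⟩ := ip u v s hs0 hs1
    have hr : r ∈ W := hWc u u.2 v v.2 r (by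
      unfold Bt; rw [r1, r2]; ring)
    exact ⟨⟨r, hr⟩, r1, r2⟩
  refine ⟨W, ⟨⟨p, hpW⟩, cvx_conn fp ip hWc⟩, ?_, ?_, ?_, ?_⟩
  · intro g
    apply Set.Subset.antisymm
    · rintro _ ⟨z, hz, rfl⟩
      exact hWi g z hz
    · intro z hz
      exact ⟨σ g⁻¹ z, hWi _ _ hz, invapp g z⟩
  · intro W' hW' hinv z hz
    have hi : ∀ (g : G), ∀ y ∈ W', σ g y ∈ W' := by
      intro g y hy
      rw [← hinv g]; exact ⟨y, hy, rfl⟩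
    obtain ⟨y, hy⟩ := hW'.1
    have hL : 0 < dist p (σ a p) := dist_pos.2 hap.1.symm
    obtain ⟨n, hn⟩ := exists_nat_mul hL (dist p y)
    have hst := straddle fp hap.fwd hap.1 hn
    have inW : ∀ z : ℤ, ((σ a) ^ z) y ∈ W' := by
      intro z; rw [← map_zpow]; exact hi _ _ hy
    have hpW' : p ∈ W' := conn_convex fp hW'.2 (inW _) (inW _) hst
    exact hz W' (fun u hu v hv w hw => conn_convex fp hW'.2 hu hv hw) (fun k => hi k p hpW')
  · apply simplicial fpW ipW ⟨p, hpW⟩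
    · intro x y c c1 c2 c3 n1 n2
      exact hB x x.2 y y.2 c c1 c2 c3 (fun e => n1 (Subtype.ext e)) (fun e => n2 (Subtype.ext e))
    · intro x hx T
      obtain ⟨y, hy, h1, h2⟩ := hE x x.2 (fun e => hx (Subtype.ext e)) T
      exact ⟨⟨y, hy⟩, h1, h2⟩
  · intro g
    have : Nonempty W := ⟨⟨p, hpW⟩⟩
    apply le_antisymm
    · obtain ⟨m, m1, m2⟩ := exists_mid ip p (σ g p)
      have hm : m ∈ W := hWc p hpW _ (hWO g) m (by unfold Bt; linarith)
      rw [← mid_core fp ip (σ g) p m m1 m2]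
      exact ciInf_le (f := fun z : W => dist (z : X) (σ g (z : X)))
        ⟨0, by rintro _ ⟨y, rfl⟩; exact dist_nonneg⟩ ⟨m, hm⟩
    · exact le_ciInf fun z => tl_le (σ g) z

end Minimal

end LL

namespace LL

section Thin

variable {H : Type*} [MetricSpace H]

lemma seg_conn {γ : ℝ → H} {a b : H} (h : IsGeodesicSegment γ a b) :
    IsPreconnected (segImage γ a b) := by
  apply isPreconnected_Icc.image
  refine LipschitzOnWith.continuousOn (K := 1) ?_
  apply LipschitzOnWith.of_dist_le_mul
  intro s hs t ht
  rw [h.2.2 s hs t ht, Real.dist_eq]; simp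

lemma seg_near {γ : ℝ → H} {a b p : H} {Δ : ℝ} (hΔ : 0 < Δ) (h : IsGeodesicSegment γ a b)
    (hp : infDist p (segImage γ a b) ≤ Δ) : dist a p + dist p b ≤ dist a b + 4 * Δ := by
  have hne : (segImage γ a b).Nonempty := ⟨γ 0, 0, ⟨le_rfl, dist_nonneg⟩, rfl⟩
  obtain ⟨w, ⟨s, hs, rfl⟩, hw⟩ := (infDist_lt_iff hne).1 (lt_of_le_of_lt hp (by linarith : Δ < 2 * Δ))
  have := geod_dist h hs
  have t1 := dist_triangle a (γ s) p
  have t2 := dist_triangle p (γ s) b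
  rw [dist_comm (γ s) p] at t1
  linarith

lemma thin_center {Δ : ℝ} (hΔ : 0 < Δ) (hgeo : GeodesicSpace H) (hthin : ThinTriangles H Δ)
    (x y z : H) {γ : ℝ → H} (hγ : IsGeodesicSegment γ x z) :
    ∃ s ∈ Set.Icc 0 (dist x z), dist x (γ s) + dist (γ s) y ≤ dist x y + 4 * Δ ∧
      dist z (γ s) + dist (γ s) y ≤ dist z y + 4 * Δ := by
  obtain ⟨γ2, h2⟩ := hgeo z y
  obtain ⟨γ3, h3⟩ := hgeo y x
  have hcl : ∀ K : Set H, IsClosed {w | infDist w K ≤ Δ} := fun K =>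
    isClosed_le (continuous_infDist_pt K) continuous_const
  have := isPreconnected_closed_iff.1 (seg_conn hγ) _ _ (hcl (segImage γ3 y x))
    (hcl (segImage γ2 z y)) (by
      intro w hw
      obtain ⟨v, hv, hd⟩ := hthin x z y γ γ2 γ3 hγ h2 h3 w hw
      rcases hv with hv | hv
      · exact Or.inr ((infDist_le_dist_of_mem hv).trans hd)
      · exact Or.inl ((infDist_le_dist_of_mem hv).trans hd))
    ⟨x, ⟨0, ⟨le_rfl, dist_nonneg⟩, hγ.1⟩, by
      have : x ∈ segImage γ3 y x := ⟨dist y x, ⟨dist_nonneg, le_rfl⟩, h3.2.1⟩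
      show infDist x _ ≤ Δ
      rw [infDist_zero_of_mem this]; exact hΔ.le⟩
    ⟨z, ⟨dist x z, ⟨dist_nonneg, le_rfl⟩, hγ.2.1⟩, by
      have : z ∈ segImage γ2 z y := ⟨0, ⟨le_rfl, dist_nonneg⟩, h2.1⟩
      show infDist z _ ≤ Δ
      rw [infDist_zero_of_mem this]; exact hΔ.le⟩
  obtain ⟨_, ⟨s, hs, rfl⟩, a1, a2⟩ := this
  refine ⟨s, hs, ?_, seg_near hΔ h2 a2⟩
  have := seg_near hΔ h3 a1
  rw [dist_comm y (γ s), dist_comm (γ s) x, dist_comm y x] at this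
  linarith

lemma fpd_of_thin {Δ : ℝ} (hΔ : 0 < Δ) (hgeo : GeodesicSpace H) (hthin : ThinTriangles H Δ) :
    FPd H (8 * Δ) := by
  intro x y z w
  obtain ⟨γ, hγ⟩ := hgeo x z
  obtain ⟨s, hs, s1, s2⟩ := thin_center hΔ hgeo hthin x y z hγ
  obtain ⟨t, ht, t1, t2⟩ := thin_center hΔ hgeo hthin x w z hγ
  have ds := geod_dist hγ hs
  have dt := geod_dist hγ ht
  have hst := hγ.2.2 s hs t ht
  rw [dist_comm z (γ s), dist_comm z y] at s2
  rw [dist_comm z (γ t)] at t2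
  have tr := dist_triangle4 y (γ s) (γ t) w
  rw [dist_comm y (γ s)] at tr
  rcases le_total s t with h | h
  · rw [abs_of_nonpos (by linarith)] at hst
    have := le_max_right (dist x y + dist z w) (dist x w + dist y z)
    linarith
  · rw [abs_of_nonneg (by linarith)] at hst
    have := le_max_left (dist x y + dist z w) (dist x w + dist y z)
    linarith

end Thin

section Limit

lemma conv {H : ℕ → Type*} [∀ n, MetricSpace (H n)] {δ : ℝ} (fp : ∀ n, FPd (H n) δ)
    {lam : ℕ → ℝ} (hl0 : ∀ n, 0 ≤ lam n) (hl : Tendsto lam atTop (nhds 0))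
    (a p b q : ∀ n, H n) {t : ℝ}
    (h1 : ∀ n, dist (a n) (p n) = t * dist (a n) (b n))
    (h2 : ∀ n, dist (p n) (b n) = (1 - t) * dist (a n) (b n)) {A B C : ℝ}
    (hA : Tendsto (fun n => lam n * dist (a n) (q n)) atTop (nhds A))
    (hB : Tendsto (fun n => lam n * dist (b n) (q n)) atTop (nhds B))
    (hC : Tendsto (fun n => lam n * dist (a n) (b n)) atTop (nhds C)) :
    Tendsto (fun n => lam n * dist (p n) (q n)) atTop
      (nhds (max (A - t * C) (B - (1 - t) * C))) := by
  have hf : Tendsto (fun n => max (lam n * dist (a n) (q n) - t * (lam n * dist (a n) (b n)))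
      (lam n * dist (b n) (q n) - (1 - t) * (lam n * dist (a n) (b n)))) atTop
      (nhds (max (A - t * C) (B - (1 - t) * C))) :=
    (hA.sub (hC.const_mul t)).max (hB.sub (hC.const_mul (1 - t)))
  have hg := hf.add (hl.mul_const δ)
  rw [zero_mul, add_zero] at hg
  refine tendsto_of_tendsto_of_tendsto_of_le_of_le hf hg ?_ ?_
  · intro n
    have t1 := dist_triangle (a n) (p n) (q n)
    have t2 := dist_triangle (b n) (p n) (q n)
    rw [dist_comm (b n) (p n)] at t2
    rw [h1] at t1
    rw [h2] at t2
    have := hl0 n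
    apply max_le <;> nlinarith
  · intro n
    have hb : Bt (a n) (p n) (b n) := by unfold Bt; rw [h1, h2]; ring
    have := fpd_le (fp n) hb (q n)
    have := mul_le_mul_of_nonneg_left this (hl0 n)
    refine this.trans (le_of_eq ?_)
    rw [mul_add, mul_max_of_nonneg _ _ (hl0 n), h1, h2]
    ring_nf

lemma kpt_zero {G : Type*} (u v : G) (h : (0:ℝ) ∈ Set.Icc (0:ℝ) 1) : kpt u v 0 h = vtx u := by
  apply Subtype.ext; funext x; simp [kpt, vtx, deltaComb]

lemma kpt_one {G : Type*} (u v : G) (h : (1:ℝ) ∈ Set.Icc (0:ℝ) 1) : kpt u v 1 h = vtx v := by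
  apply Subtype.ext; funext x; simp [kpt, vtx, deltaComb]

lemma kpt_swap {G : Type*} (u v : G) (t : ℝ) (h) (h') : kpt u v t h = kpt v u (1 - t) h' := by
  apply Subtype.ext; funext x; simp [kpt, deltaComb]; ring

lemma exists_kpt {G : Type*} (p : KG G) : ∃ u v t, ∃ ht, p = kpt u v t ht := by
  obtain ⟨f, u, v, t, ht, rfl⟩ := p
  exact ⟨u, v, t, ht, rfl⟩

lemma straight_left {G H : Type*} [MetricSpace H] {ι : KG G → H} (h : StraightOnKG ι) (u v : G)
    (t : ℝ) (ht) : dist (ι (vtx u)) (ι (kpt u v t ht)) = t * dist (ι (vtx u)) (ι (vtx v)) := by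
  have := h u v t ht
  have e0 := kpt_zero u v ⟨le_refl _, zero_le_one⟩
  have e1 := kpt_one u v ⟨zero_le_one, le_refl _⟩
  rw [e1, e0] at this
  exact this

lemma straight_right {G H : Type*} [MetricSpace H] {ι : KG G → H} (h : StraightOnKG ι) (u v : G)
    (t : ℝ) (ht) :
    dist (ι (kpt u v t ht)) (ι (vtx v)) = (1 - t) * dist (ι (vtx u)) (ι (vtx v)) := by
  have ht' : 1 - t ∈ Set.Icc (0 : ℝ) 1 := ⟨by linarith [ht.2], by linarith [ht.1]⟩
  have := straight_left h v u (1 - t) ht'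
  rw [← kpt_swap u v t ht ht'] at this
  rw [dist_comm, this, dist_comm (ι (vtx v))]

lemma leftMul_one {G : Type*} [Group G] (p : KG G) : leftMulKG 1 p = p := by
  apply Subtype.ext; funext x; simp [leftMulKG]

lemma leftMul_mul {G : Type*} [Group G] (g h : G) (p : KG G) :
    leftMulKG (g * h) p = leftMulKG g (leftMulKG h p) := by
  apply Subtype.ext; funext x; simp [leftMulKG, mul_assoc]

lemma countable_of_gen {G : Type*} [Group G] (S : Finset G)
    (hgen : Subgroup.closure (S : Set G) = ⊤) : Countable G := by
  have h1 : Function.Surjective (FreeGroup.lift (fun s : S => (s : G))) := by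
    rw [← MonoidHom.range_eq_top, FreeGroup.range_lift_eq_closure]
    simpa using hgen
  have h2 : Function.Surjective (FreeGroup.mk : List (S × Bool) → FreeGroup S) :=
    Quot.mk_surjective
  exact (h1.comp h2).countable

lemma lam_bound {G : Type*} [Group G] (S : Finset G) (hgen : Subgroup.closure (S : Set G) = ⊤)
    {H : ℕ → Type*} [∀ n, MetricSpace (H n)] (ρ : ∀ n, G →* (H n ≃ᵢ H n)) (x : ∀ n, H n)
    (lam : ℕ → ℝ) (hl0 : ∀ n, 0 ≤ lam n)
    (hS : ∀ s ∈ S, ∀ n, lam n * dist (x n) (ρ n s (x n)) ≤ 1) (g : G) :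
    ∃ C : ℝ, ∀ n, lam n * dist (x n) (ρ n g (x n)) ≤ C := by
  have hg : g ∈ Subgroup.closure (S : Set G) := by rw [hgen]; trivial
  induction hg using Subgroup.closure_induction with
  | mem s hs => exact ⟨1, hS s hs⟩
  | one => exact ⟨0, fun n => by simp⟩
  | mul a b _ _ iha ihb =>
    obtain ⟨A, hA⟩ := iha
    obtain ⟨B, hB⟩ := ihb
    refine ⟨A + B, fun n => ?_⟩
    have e : ρ n (a * b) (x n) = ρ n a (ρ n b (x n)) := by rw [map_mul]; rfl
    have t := dist_triangle (x n) (ρ n a (x n)) (ρ n a (ρ n b (x n)))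
    rw [(ρ n a).dist_eq (x n) (ρ n b (x n))] at t
    rw [e]
    have := mul_le_mul_of_nonneg_left t (hl0 n)
    linarith [hA n, hB n]
  | inv a _ iha =>
    obtain ⟨A, hA⟩ := iha
    refine ⟨A, fun n => ?_⟩
    have e : dist (x n) (ρ n a⁻¹ (x n)) = dist (x n) (ρ n a (x n)) := by
      rw [← (ρ n a).dist_eq (x n) (ρ n a⁻¹ (x n)), map_inv]
      rw [IsometryEquiv.apply_inv_self, dist_comm]
    rw [e]; exact hA n

/-- the induced action -/
lemma exists_action {G K Γ : Type*} [Group G] [MetricSpace Γ] (act : G → K → K)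
    (h1 : ∀ p, act 1 p = p) (h2 : ∀ g h p, act (g * h) p = act g (act h p))
    (d : K → K → ℝ) (hd : ∀ g p q, d (act g p) (act g q) = d p q)
    (qm : K → Γ) (hs : Function.Surjective qm) (hq : ∀ p q, dist (qm p) (qm q) = d p q) :
    ∃ σ : G →* (Γ ≃ᵢ Γ), ∀ g p, σ g (qm p) = qm (act g p) := by
  let f : G → Γ → Γ := fun g z => qm (act g (Function.surjInv hs z))
  have hf : ∀ g p, f g (qm p) = qm (act g p) := by
    intro g p
    apply dist_eq_zero.1
    simp only [f]
    rw [hq, hd, ← hq, Function.surjInv_eq hs, dist_self]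
  have hfm : ∀ g h z, f (g * h) z = f g (f h z) := by
    intro g h z
    obtain ⟨p, rfl⟩ := hs z
    rw [hf (g * h) p, hf h p, hf g, h2]
  have hf1 : ∀ z, f 1 z = z := by
    intro z
    obtain ⟨p, rfl⟩ := hs z
    rw [hf, h1]
  have hiso : ∀ g, Isometry (f g) := by
    intro g
    apply Isometry.of_dist_eq
    intro z w
    obtain ⟨p, rfl⟩ := hs z
    obtain ⟨q, rfl⟩ := hs w
    rw [hf, hf, hq, hd, hq]
  let e : G → (Γ ≃ᵢ Γ) := fun g =>
    { toFun := f g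
      invFun := f g⁻¹
      left_inv := fun z => by rw [← hfm, inv_mul_cancel, hf1]
      right_inv := fun z => by rw [← hfm, mul_inv_cancel, hf1]
      isometry_toFun := hiso g }
  refine ⟨⟨⟨e, ?_⟩, ?_⟩, hf⟩
  · ext z; exact hf1 z
  · intro g h; ext z; exact hfm g h z

end Limit

end LL


namespace LL

section Final

lemma vert_conv {G : Type*} [Group G] (S : Finset G) (hgen : Subgroup.closure (S : Set G) = ⊤)
    {H : ℕ → Type*} [∀ n, MetricSpace (H n)] (ρ : ∀ n, G →* (H n ≃ᵢ H n)) (x : ∀ n, H n)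
    (lam : ℕ → ℝ) (hl0 : ∀ n, 0 ≤ lam n)
    (hS : ∀ s ∈ S, ∀ n, lam n * dist (x n) (ρ n s (x n)) ≤ 1) :
    ∃ φ : ℕ → ℕ, StrictMono φ ∧ ∃ D : G → G → ℝ, ∀ g h,
      Tendsto (fun i => lam (φ i) * dist (ρ (φ i) g (x (φ i))) (ρ (φ i) h (x (φ i)))) atTop
        (nhds (D g h)) := by
  have := countable_of_gen S hgen
  choose C hC using lam_bound S hgen ρ x lam hl0 hS
  let f : ℕ → (G × G → ℝ) := fun n gh => lam n * dist (ρ n gh.1 (x n)) (ρ n gh.2 (x n))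
  have hcomp : IsCompact (Set.univ.pi fun gh : G × G => Set.Icc (0 : ℝ) (C (gh.1⁻¹ * gh.2))) :=
    isCompact_univ_pi fun _ => isCompact_Icc
  have hf : ∀ n, f n ∈ Set.univ.pi fun gh : G × G => Set.Icc (0 : ℝ) (C (gh.1⁻¹ * gh.2)) := by
    rintro n ⟨g, h⟩ -
    refine ⟨mul_nonneg (hl0 n) dist_nonneg, ?_⟩
    have := hC (g⁻¹ * h) n
    rw [← (ρ n g).dist_eq (x n), ← IsometryEquiv.mul_apply, ← map_mul, mul_inv_cancel_left] at this
    exact this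
  obtain ⟨D, -, φ, hφ, hD⟩ := hcomp.tendsto_subseq hf
  refine ⟨φ, hφ, fun g h => D (g, h), fun g h => ?_⟩
  exact (tendsto_pi_nhds.1 hD) (g, h)

lemma all_conv {G : Type*} {H : ℕ → Type*} [∀ n, MetricSpace (H n)] {δ : ℝ}
    (fp : ∀ n, FPd (H n) δ) (ι : ∀ n, KG G → H n) (hst : ∀ n, StraightOnKG (ι n))
    {lam : ℕ → ℝ} (hl0 : ∀ n, 0 ≤ lam n) (hl : Tendsto lam atTop (nhds 0))
    (D : G → G → ℝ)
    (hD : ∀ g h, Tendsto (fun n => lam n * dist (ι n (vtx g)) (ι n (vtx h))) atTop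
      (nhds (D g h))) :
    ∃ d : KG G → KG G → ℝ, ∀ p q,
      Tendsto (fun n => lam n * dist (ι n p) (ι n q)) atTop (nhds (d p q)) := by
  have step : ∀ (p : KG G) (q : KG G) (A : G → ℝ),
      (∀ g, Tendsto (fun n => lam n * dist (ι n (vtx g)) (ι n q)) atTop (nhds (A g))) →
      ∃ L : ℝ, Tendsto (fun n => lam n * dist (ι n p) (ι n q)) atTop (nhds L) := by
    intro p q A hA
    obtain ⟨u, v, t, ht, rfl⟩ := exists_kpt p
    exact ⟨_, conv fp hl0 hl (fun n => ι n (vtx u)) (fun n => ι n (kpt u v t ht))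
      (fun n => ι n (vtx v)) (fun n => ι n q) (t := t)
      (fun n => straight_left (hst n) u v t ht) (fun n => straight_right (hst n) u v t ht)
      (hA u) (hA v) (hD u v)⟩
  have h1 : ∀ p g, ∃ L : ℝ, Tendsto (fun n => lam n * dist (ι n p) (ι n (vtx g))) atTop (nhds L) :=
    fun p g => step p (vtx g) (fun u => D u g) (fun u => hD u g)
  choose A hA using h1
  have h2 : ∀ p q, ∃ L : ℝ, Tendsto (fun n => lam n * dist (ι n p) (ι n q)) atTop (nhds L) := by
    intro p q
    refine step p q (fun u => A q u) (fun u => ?_)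
    simpa [dist_comm] using hA q u
  choose d hd using h2
  exact ⟨d, hd⟩

lemma quotient_ip {G : Type*} {Γ : Type*} [MetricSpace Γ] (fp : FP Γ) (qm : KG G → Γ)
    (hs : Function.Surjective qm)
    (e1 : ∀ u v t ht, dist (qm (vtx u)) (qm (kpt u v t ht)) = t * dist (qm (vtx u)) (qm (vtx v)))
    (e2 : ∀ u v t ht, dist (qm (kpt u v t ht)) (qm (vtx v))
      = (1 - t) * dist (qm (vtx u)) (qm (vtx v))) : IP Γ := by
  have h0 : ∀ u v, ∀ s : ℝ, 0 ≤ s → s ≤ dist (qm (vtx u)) (qm (vtx v)) →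
      ∃ r, dist (qm (vtx u)) r = s ∧ dist r (qm (vtx v)) = dist (qm (vtx u)) (qm (vtx v)) - s := by
    intro u v s h0 h1
    rcases eq_or_lt_of_le (dist_nonneg (x := qm (vtx u)) (y := qm (vtx v))) with h | h
    · refine ⟨qm (vtx u), ?_, ?_⟩
      · rw [dist_self]; linarith
      · linarith
    · have ht : s / dist (qm (vtx u)) (qm (vtx v)) ∈ Set.Icc (0 : ℝ) 1 :=
        ⟨by positivity, by rw [div_le_one h]; exact h1⟩
      refine ⟨qm (kpt u v _ ht), ?_, ?_⟩
      · rw [e1]; field_simp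
      · rw [e2]; field_simp
  have flip : ∀ p q : Γ, (∀ s : ℝ, 0 ≤ s → s ≤ dist p q → ∃ r, dist p r = s ∧ dist r q = dist p q - s)
      → (∀ s : ℝ, 0 ≤ s → s ≤ dist q p → ∃ r, dist q r = s ∧ dist r p = dist q p - s) := by
    intro p q h s s0 s1
    rw [dist_comm q p] at s1
    obtain ⟨r, r1, r2⟩ := h (dist p q - s) (by linarith) (by linarith)
    refine ⟨r, ?_, ?_⟩
    · rw [dist_comm, r2]; ring
    · rw [dist_comm, r1, dist_comm q p]
  have gen : ∀ q : Γ, (∀ u, ∀ s : ℝ, 0 ≤ s → s ≤ dist (qm (vtx u)) q →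
      ∃ r, dist (qm (vtx u)) r = s ∧ dist r q = dist (qm (vtx u)) q - s) →
      ∀ p : Γ, ∀ s : ℝ, 0 ≤ s → s ≤ dist p q → ∃ r, dist p r = s ∧ dist r q = dist p q - s := by
    intro q hq p
    obtain ⟨k, rfl⟩ := hs p
    obtain ⟨u, v, t, ht, rfl⟩ := exists_kpt k
    have hb : Bt (qm (vtx u)) (qm (kpt u v t ht)) (qm (vtx v)) := by
      unfold Bt; rw [e1, e2]; ring
    rcases bt_cases fp hb q with h | h
    · exact ip_sub fp h (hq u)
    · exact ip_sub fp h (hq v)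
  intro p q
  apply gen q
  intro u
  apply flip
  apply gen
  intro v
  exact h0 v u

lemma len_conv {H : ℕ → Type*} [∀ n, MetricSpace (H n)] {δ : ℝ} (hδ : 0 ≤ δ)
    (fp : ∀ n, FPd (H n) δ) (hgeo : ∀ n, GeodesicSpace (H n))
    {lam : ℕ → ℝ} (hl0 : ∀ n, 0 ≤ lam n) (hl : Tendsto lam atTop (nhds 0))
    (x : ∀ n, H n) (τ : ∀ n, H n ≃ᵢ H n) {A B : ℝ}
    (hA : Tendsto (fun n => lam n * dist (x n) (τ n (x n))) atTop (nhds A))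
    (hB : Tendsto (fun n => lam n * dist (x n) (τ n (τ n (x n)))) atTop (nhds B)) :
    Tendsto (fun n => lam n * translationLength (τ n)) atTop (nhds (max 0 (B - A))) := by
  have hf : Tendsto (fun n => max 0 (lam n * dist (x n) (τ n (τ n (x n))) -
      lam n * dist (x n) (τ n (x n)))) atTop (nhds (max 0 (B - A))) :=
    tendsto_const_nhds.max (hB.sub hA)
  have hz : Tendsto (fun n => lam n * (2 * δ)) atTop (nhds 0) := by
    simpa using hl.mul_const (2 * δ)
  have h1 := hf.sub hz
  have h2 := hf.add hz
  rw [sub_zero] at h1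
  rw [add_zero] at h2
  have key : ∀ n, |translationLength (τ n) -
      max 0 (dist (x n) (τ n (τ n (x n))) - dist (x n) (τ n (x n)))| ≤ 2 * δ := by
    intro n
    obtain ⟨γ, hγ⟩ := hgeo n (x n) (τ n (x n))
    have hd := dist_nonneg (x := x n) (y := τ n (x n))
    have := geod_dist hγ (s := dist (x n) (τ n (x n)) / 2) ⟨by linarith, by linarith⟩
    exact tl_bounds hδ (fp n) (τ n) (x n) _ this.1 (by linarith [this.2])
  have e : ∀ n, max 0 (lam n * dist (x n) (τ n (τ n (x n))) - lam n * dist (x n) (τ n (x n)))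
      = lam n * max 0 (dist (x n) (τ n (τ n (x n))) - dist (x n) (τ n (x n))) := by
    intro n
    rw [mul_max_of_nonneg _ _ (hl0 n), mul_zero, mul_sub]
  refine tendsto_of_tendsto_of_tendsto_of_le_of_le h1 h2 ?_ ?_
  · intro n
    have := mul_le_mul_of_nonneg_left (abs_le.1 (key n)).1 (hl0 n)
    simp only [e]
    linarith
  · intro n
    have := mul_le_mul_of_nonneg_left (abs_le.1 (key n)).2 (hl0 n)
    simp only [e]
    linarith

lemma rescale_facts {G H : Type*} [Group G] [MetricSpace H] (S : Finset G) (hS : S.Nonempty)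
    (ρ : G →* (H ≃ᵢ H)) (x : H) (ι : KG G → H) (hv : ∀ g, ι (vtx g) = ρ g x) :
    rescaleFactor S hS ι = (max 1 (rS S hS ρ x))⁻¹ := by
  unfold rescaleFactor rS
  simp only [hv, map_one]
  rfl

lemma quotient_space {K : Type u} (d : K → K → ℝ) (h0 : ∀ p, d p p = 0)
    (hc : ∀ p q, d p q = d q p) (ht : ∀ p q r, d p r ≤ d p q + d q r) :
    ∃ (Γ : Type u) (_ : MetricSpace Γ) (qm : K → Γ), Function.Surjective qm ∧
      ∀ p q, dist (qm p) (qm q) = d p q := by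
  letI : PseudoMetricSpace K :=
    { dist := d
      dist_self := h0
      dist_comm := hc
      dist_triangle := ht }
  exact ⟨SeparationQuotient K, inferInstance, SeparationQuotient.mk,
    SeparationQuotient.surjective_mk, fun p q => SeparationQuotient.dist_mk p q⟩

lemma common_fix {G X : Type*} [Group G] [MetricSpace X] (fp : FP X) (ip : IP X)
    (S : Finset G) (hS : S.Nonempty) (σ : G →* (X ≃ᵢ X)) (z : X)
    (h0 : ∀ g, translationLength (σ g) = 0) : ∃ m, ∀ s ∈ S, σ s m = m := by
  obtain ⟨s, hs, hmax⟩ := S.exists_max_image (fun s => dist z (σ s z)) hS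
  obtain ⟨m, m1, m2⟩ := exists_mid ip z (σ s z)
  have hc := mid_core fp ip (σ s) z m m1 m2
  rw [h0] at hc
  refine ⟨m, fun t ht => serre fp ip (σ s) (σ t) z m ?_ (dist_eq_zero.1 hc).symm (h0 t) ?_
    (hmax t ht)⟩
  · unfold Bt; rw [m1, m2]; ring
  · rw [← map_mul]; exact h0 _

end Final

end LL

/-- The main limiting proposition: a blowing-up sequence of isometric
actions of a finitely generated group on geodesic spaces with `Δ`-thin triangles
subconverges, after rescaling, to an isometric action on an `ℝ`-tree with a hyperbolic
element, the length functions converging projectively; if moreover the limit action is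
irreducible with integer translation lengths, the minimal invariant subtree is simplicial
with the same length function. -/
theorem length_limit {G : Type u} [Group G]
    (S : Finset G) (hS : S.Nonempty) (hgen : Subgroup.closure (S : Set G) = ⊤)
    {Δ : ℝ} (hΔ : 0 < Δ)
    (H : ℕ → Type v) [∀ n, MetricSpace (H n)] [∀ n, Nonempty (H n)]
    (hgeo : ∀ n, GeodesicSpace (H n)) (hthin : ∀ n, ThinTriangles (H n) Δ)
    (ρ : ∀ n, G →* (H n ≃ᵢ H n))
    (hblow : ∃ α : G,
      Filter.Tendsto (fun n => translationLength (ρ n α)) Filter.atTop Filter.atTop)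
    (x : ∀ n, H n)
    (hcenter : ∀ n, ∀ y : H n, rS S hS (ρ n) (x n) ≤ rS S hS (ρ n) y + 1)
    (ι : ∀ n, KG G → H n)
    (hvert : ∀ n, ∀ g : G, ι n (vtx g) = ρ n g (x n))
    (hstraight : ∀ n, StraightOnKG (ι n))
    (hequiv : ∀ n, ∀ g : G, ∀ p : KG G, ι n (leftMulKG g p) = ρ n g (ι n p)) :
    ∃ φ : ℕ → ℕ, StrictMono φ ∧
      Filter.Tendsto (fun i => rescaleFactor S hS (ι (φ i))) Filter.atTop (nhds 0) ∧
      ∃ dbar : KG G → KG G → ℝ,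
        (∀ p, dbar p p = 0) ∧ (∀ p q, dbar p q = dbar q p) ∧
        (∀ p q r, dbar p r ≤ dbar p q + dbar q r) ∧
        (∀ p q : KG G,
          Filter.Tendsto
            (fun i => rescaleFactor S hS (ι (φ i)) * dist (ι (φ i) p) (ι (φ i) q))
            Filter.atTop (nhds (dbar p q))) ∧
        ∃ (Γ : Type u) (_ : MetricSpace Γ) (qm : KG G → Γ),
          Function.Surjective qm ∧ (∀ p q', dist (qm p) (qm q') = dbar p q') ∧
          IsRTree Γ ∧
          ∃ σ : G →* (Γ ≃ᵢ Γ),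
            (∀ g : G, ∀ p : KG G, σ g (qm p) = qm (leftMulKG g p)) ∧
            (∃ g : G, IsHyperbolicIsom (σ g)) ∧
            (∀ g : G,
              Filter.Tendsto
                (fun i => rescaleFactor S hS (ι (φ i)) * translationLength (ρ (φ i) g))
                Filter.atTop (nhds (translationLength (σ g)))) ∧
            (((∃ a b : G, IsHyperbolicIsom (σ a) ∧ IsHyperbolicIsom (σ b) ∧
                  Disjoint (isomCore (σ a)) (isomCore (σ b))) ∧
              (∀ g : G, ∃ k : ℤ, translationLength (σ g) = (k : ℝ))) →
              ∃ W : Set Γ, IsConnected W ∧ (∀ g : G, σ g '' W = W) ∧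
                (∀ W' : Set Γ, IsConnected W' → (∀ g : G, σ g '' W' = W') → W ⊆ W') ∧
                IsMetricSimplicialTree ↥W ∧
                (∀ g : G, (⨅ z : W, dist (z : Γ) (σ g (z : Γ)))
                    = translationLength (σ g))) := by
  have hM : ∀ n, rescaleFactor S hS (ι n) = (max 1 (rS S hS (ρ n) (x n)))⁻¹ := fun n =>
    LL.rescale_facts S hS (ρ n) (x n) (ι n) (hvert n)
  set lam : ℕ → ℝ := fun n => rescaleFactor S hS (ι n) with hlam
  have hM1 : ∀ n, 1 ≤ max 1 (rS S hS (ρ n) (x n)) := fun n => le_max_left _ _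
  have hlM : ∀ n, lam n * max 1 (rS S hS (ρ n) (x n)) = 1 := by
    intro n
    have := hM1 n
    show rescaleFactor S hS (ι n) * _ = 1
    rw [hM n]
    exact inv_mul_cancel₀ (by linarith)
  have hlpos : ∀ n, 0 < lam n := by
    intro n
    have := hM1 n
    show 0 < rescaleFactor S hS (ι n)
    rw [hM n]; positivity
  have hl0 : ∀ n, 0 ≤ lam n := fun n => (hlpos n).le
  have hSb : ∀ s ∈ S, ∀ n, lam n * dist (x n) (ρ n s (x n)) ≤ 1 := by
    intro s hs n
    rw [← hlM n]
    refine mul_le_mul_of_nonneg_left ?_ (hl0 n)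
    exact le_trans (Finset.le_sup' (fun α => dist (x n) (ρ n α (x n))) hs) (le_max_right _ _)
  -- the rescaling factors tend to zero
  have hl : Tendsto lam atTop (nhds 0) := by
    obtain ⟨α, hα⟩ := hblow
    obtain ⟨C, hC⟩ := LL.lam_bound S hgen ρ x lam hl0 hSb α
    have h1 : Tendsto (fun n => (max 0 C) * (translationLength (ρ n α))⁻¹) atTop (nhds 0) := by
      simpa using (tendsto_inv_atTop_zero.comp hα).const_mul (max 0 C)
    refine squeeze_zero' (Eventually.of_forall hl0) ?_ h1
    filter_upwards [hα.eventually_gt_atTop 0] with n hn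
    rw [← div_eq_mul_inv, le_div_iff₀ hn]
    exact (mul_le_mul_of_nonneg_left (LL.tl_le (ρ n α) (x n)) (hl0 n)).trans
      ((hC n).trans (le_max_right _ _))
  have hfpd : ∀ n, LL.FPd (H n) (8 * Δ) := fun n => LL.fpd_of_thin hΔ (hgeo n) (hthin n)
  obtain ⟨φ, hφ, D, hD⟩ := LL.vert_conv S hgen ρ x lam hl0 hSb
  have hlφ : Tendsto (fun i => lam (φ i)) atTop (nhds 0) := hl.comp hφ.tendsto_atTop
  obtain ⟨d, hd⟩ := LL.all_conv (H := fun i => H (φ i)) (fun i => hfpd (φ i)) (fun i => ι (φ i))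
    (fun i => hstraight (φ i)) (lam := fun i => lam (φ i)) (fun i => hl0 (φ i)) hlφ D (by
      intro g h
      simp only [hvert]
      exact hD g h)
  have d0 : ∀ p, d p p = 0 := fun p => tendsto_nhds_unique (hd p p) (by simp)
  have dc : ∀ p q, d p q = d q p := fun p q =>
    tendsto_nhds_unique (hd p q) (by simpa only [dist_comm] using hd q p)
  have dt : ∀ p q r, d p r ≤ d p q + d q r := by
    intro p q r
    refine le_of_tendsto_of_tendsto' (hd p r) ((hd p q).add (hd q r)) (fun i => ?_)
    rw [← mul_add]
    exact mul_le_mul_of_nonneg_left (dist_triangle _ _ _) (hl0 _)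
  have dinv : ∀ g p q, d (leftMulKG g p) (leftMulKG g q) = d p q := by
    intro g p q
    refine tendsto_nhds_unique (hd _ _) ?_
    simp only [hequiv, IsometryEquiv.dist_eq]
    exact hd p q
  have dfp : ∀ p q r s, d p r + d q s ≤ max (d p q + d r s) (d p s + d q r) := by
    intro p q r s
    have hz : Tendsto (fun i => lam (φ i) * (8 * Δ)) atTop (nhds 0) := by
      simpa using hlφ.mul_const (8 * Δ)
    have hr := (((hd p q).add (hd r s)).max ((hd p s).add (hd q r))).add hz
    rw [add_zero] at hr
    refine le_of_tendsto_of_tendsto' ((hd p r).add (hd q s)) hr (fun i => ?_)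
    have := mul_le_mul_of_nonneg_left
      (hfpd (φ i) (ι (φ i) p) (ι (φ i) q) (ι (φ i) r) (ι (φ i) s)) (hl0 (φ i))
    rw [mul_add, mul_add, mul_max_of_nonneg _ _ (hl0 (φ i)), mul_add, mul_add] at this
    exact this
  have de1 : ∀ u v t ht, d (vtx u) (kpt u v t ht) = t * d (vtx u) (vtx v) := by
    intro u v t ht
    refine tendsto_nhds_unique (hd _ _) ?_
    simp only [LL.straight_left (hstraight _) u v t ht, mul_left_comm _ t]
    exact (hd _ _).const_mul t
  have de2 : ∀ u v t ht, d (kpt u v t ht) (vtx v) = (1 - t) * d (vtx u) (vtx v) := by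
    intro u v t ht
    refine tendsto_nhds_unique (hd _ _) ?_
    simp only [LL.straight_right (hstraight _) u v t ht, mul_left_comm _ (1 - t)]
    exact (hd _ _).const_mul (1 - t)
  refine ⟨φ, hφ, hlφ, d, d0, dc, dt, hd, ?_⟩
  obtain ⟨Γ, mΓ, qm, hqs, hq⟩ := LL.quotient_space d d0 dc dt
  have fp : LL.FP Γ := by
    intro a b c e
    obtain ⟨a, rfl⟩ := hqs a
    obtain ⟨b, rfl⟩ := hqs b
    obtain ⟨c, rfl⟩ := hqs c
    obtain ⟨e, rfl⟩ := hqs e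
    simp only [hq]
    exact dfp a b c e
  have ip : LL.IP Γ := LL.quotient_ip fp qm hqs (fun u v t ht => by simp only [hq]; exact de1 u v t ht)
    (fun u v t ht => by simp only [hq]; exact de2 u v t ht)
  obtain ⟨σ, hσ⟩ := LL.exists_action leftMulKG LL.leftMul_one LL.leftMul_mul d dinv qm hqs hq
  have hne : Nonempty Γ := ⟨qm (vtx 1)⟩
  have hlen : ∀ g : G, Tendsto (fun i => lam (φ i) * translationLength (ρ (φ i) g)) atTop
      (nhds (translationLength (σ g))) := by
    intro g
    rw [LL.tl_eq fp ip (σ g) (qm (vtx 1))]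
    refine LL.len_conv (H := fun i => H (φ i)) (by positivity) (fun i => hfpd (φ i))
      (fun i => hgeo (φ i)) (lam := fun i => lam (φ i)) (fun i => hl0 (φ i)) hlφ
      (fun i => ι (φ i) (vtx 1)) (fun i => ρ (φ i) g) ?_ ?_
    · rw [hσ, hq]
      simp only [← hequiv]
      exact hd _ _
    · rw [hσ, hσ, hq]
      simp only [← hequiv]
      exact hd _ _
  refine ⟨Γ, mΓ, qm, hqs, hq, LL.isRTree fp ip, σ, hσ, ?_, hlen, ?_⟩
  · by_contra hcon
    have hz : ∀ g, translationLength (σ g) = 0 := by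
      intro g
      by_contra hg
      exact hcon ⟨g, LL.hyp_of_pos fp ip (σ g)
        (lt_of_le_of_ne (LL.tl_nonneg _) (Ne.symm hg)) hne⟩
    obtain ⟨m, hm⟩ := LL.common_fix fp ip S hS σ (qm (vtx 1)) hz
    obtain ⟨p, rfl⟩ := hqs m
    have hsm : ∀ s ∈ S, ∀ᶠ i in atTop,
        lam (φ i) * dist (ι (φ i) p) (ρ (φ i) s (ι (φ i) p)) < 1 / 3 := by
      intro s hs
      have h1 := hd p (leftMulKG s p)
      rw [← hq, ← hσ, hm s hs, dist_self] at h1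
      simp only [hequiv] at h1
      exact h1.eventually (gt_mem_nhds (by norm_num))
    have hall := (Filter.eventually_all_finset S).2 hsm
    have hl3 := hlφ.eventually (gt_mem_nhds (by norm_num : (0 : ℝ) < 1 / 3))
    obtain ⟨i, hi1, hi2⟩ := (hall.and hl3).exists
    have hr : lam (φ i) * rS S hS (ρ (φ i)) (ι (φ i) p) < 1 / 3 := by
      obtain ⟨s, hs, he⟩ := S.exists_mem_eq_sup' hS
        (fun α => dist (ι (φ i) p) (ρ (φ i) α (ι (φ i) p)))
      have := hi1 s hs
      unfold rS
      rw [he]; exact this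
    have hx := hcenter (φ i) (ι (φ i) p)
    have h1 := hlM (φ i)
    have hx2 := mul_le_mul_of_nonneg_left hx (hl0 (φ i))
    rw [mul_max_of_nonneg _ _ (hl0 _)] at h1
    have : max (lam (φ i) * 1) (lam (φ i) * rS S hS (ρ (φ i)) (x (φ i))) < 1 := by
      apply max_lt <;> linarith
    linarith
  · rintro ⟨⟨a, b, ha, hb, hdis⟩, hint⟩
    exact LL.minimal fp ip σ a b ha.1 hb.1 hdis hne hint
end

section
/- Fix Δ > 0 and a finitely generated group G, and let Hom_Δ(G) be the class of all homomorphisms of G into Isom(X) over all geodesic spaces X with Δ-thin triangles. Then the image of the map L : Hom_Δ(G) → LF(G), L(ρ)(g) = t(ρg), has compact closure in LF(G) ∪ PLF(G) (with the topology in which L_n ∈ LF(G) converges to [L] ∈ PLF(G) iff there exist λ_n → 0 with λ_n L_n → L pointwise). Moreover every point of the closure that lies in PLF(G) is the projectivized length function of an action of G by isometries on an ℝ-tree with no global fixed point. -/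
open Set Filter Metric

section Helpers

/-- The four point condition with additive error `δ`. -/
def FourPt (X : Type*) [PseudoMetricSpace X] (δ : ℝ) : Prop :=
  ∀ w x y z : X, dist w x + dist y z ≤
    max (dist w y + dist x z) (dist w z + dist x y) + δ

/-- On a side of a thin triangle there is a point close to both other sides. -/
lemma thin_center {H : Type*} [MetricSpace H] {Δ : ℝ} (hgeo : GeodesicSpace H)
    (hthin : ThinTriangles H Δ) {γ : ℝ → H} {w x : H} (hγ : IsGeodesicSegment γ w x) (y : H) :
    ∃ t ∈ Set.Icc (0:ℝ) (dist w x),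
      dist w (γ t) + dist (γ t) y ≤ dist w y + 2 * Δ ∧
      dist x (γ t) + dist (γ t) y ≤ dist x y + 2 * Δ := by
  obtain ⟨γ2, h2⟩ := hgeo x y
  obtain ⟨γ3, h3⟩ := hgeo y w
  have hcont : ContinuousOn γ (Set.Icc (0:ℝ) (dist w x)) := by
    have : LipschitzOnWith 1 γ (Set.Icc (0:ℝ) (dist w x)) := by
      refine LipschitzOnWith.of_dist_le_mul ?_
      intro s hs t ht
      rw [hγ.2.2 s hs t ht, Real.dist_eq]; simp
    exact this.continuousOn
  set I := Set.Icc (0:ℝ) (dist w x) with hI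
  have hIc : IsClosed I := isClosed_Icc
  have hcA : ContinuousOn (fun t => dist w (γ t) + dist (γ t) y) I := by fun_prop
  have hcB : ContinuousOn (fun t => dist x (γ t) + dist (γ t) y) I := by fun_prop
  have hA := hcA.preimage_isClosed_of_isClosed hIc (isClosed_Iic (a := dist w y + 2 * Δ))
  have hB := hcB.preimage_isClosed_of_isClosed hIc (isClosed_Iic (a := dist x y + 2 * Δ))
  have hcov : ∀ t ∈ I, dist w (γ t) + dist (γ t) y ≤ dist w y + 2 * Δ ∨
      dist x (γ t) + dist (γ t) y ≤ dist x y + 2 * Δ := by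
    intro t ht
    obtain ⟨v, hv, hd⟩ := hthin w x y γ γ2 γ3 hγ h2 h3 (γ t) ⟨t, ht, rfl⟩
    rcases hv with ⟨s, hs, rfl⟩ | ⟨s, hs, rfl⟩
    · right
      have e1 := h2.2.2 0 ⟨le_rfl, dist_nonneg⟩ s hs
      have e2 := h2.2.2 s hs (dist x y) ⟨dist_nonneg, le_rfl⟩
      rw [h2.1] at e1
      rw [h2.2.1] at e2
      rw [abs_of_nonpos (by linarith [hs.1])] at e1
      rw [abs_of_nonpos (by linarith [hs.2])] at e2
      have t1 := dist_triangle x (γ2 s) (γ t)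
      have t2 := dist_triangle (γ t) (γ2 s) y
      rw [dist_comm (γ2 s) (γ t)] at t1
      linarith
    · left
      have e1 := h3.2.2 0 ⟨le_rfl, dist_nonneg⟩ s hs
      have e2 := h3.2.2 s hs (dist y w) ⟨dist_nonneg, le_rfl⟩
      rw [h3.1] at e1
      rw [h3.2.1] at e2
      rw [abs_of_nonpos (by linarith [hs.1])] at e1
      rw [abs_of_nonpos (by linarith [hs.2])] at e2
      have t1 := dist_triangle w (γ3 s) (γ t)
      have t2 := dist_triangle (γ t) (γ3 s) y
      rw [dist_comm (γ3 s) (γ t), dist_comm w (γ3 s)] at t1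
      rw [dist_comm (γ3 s) y] at t2
      rw [dist_comm w y]
      linarith
  have hΔ : 0 ≤ Δ := by
    obtain ⟨v, hv, hd⟩ := hthin w x y γ γ2 γ3 hγ h2 h3 (γ 0) ⟨0, ⟨le_rfl, dist_nonneg⟩, rfl⟩
    exact dist_nonneg.trans hd
  have h0 : (0:ℝ) ∈ I := ⟨le_rfl, dist_nonneg⟩
  have hL : dist w x ∈ I := ⟨dist_nonneg, le_rfl⟩
  have hpc : IsPreconnected I := isPreconnected_Icc
  rw [isPreconnected_closed_iff] at hpc
  obtain ⟨t, ht, htA, htB⟩ := hpc _ _ hA hB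
    (by
      intro t ht
      rcases hcov t ht with h | h
      · exact Or.inl ⟨ht, h⟩
      · exact Or.inr ⟨ht, h⟩)
    ⟨0, h0, h0, by simp [hγ.1]; exact hΔ⟩
    ⟨dist w x, hL, hL, by simp [hγ.2.1]; exact hΔ⟩
  exact ⟨t, ht, htA.2, htB.2⟩

lemma thin_fourPt {H : Type*} [MetricSpace H] {Δ : ℝ} (hgeo : GeodesicSpace H)
    (hthin : ThinTriangles H Δ) : FourPt H (4 * Δ) := by
  intro w x y z
  obtain ⟨γ, hγ⟩ := hgeo w x
  obtain ⟨p, hp, hp1, hp2⟩ := thin_center hgeo hthin hγ y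
  obtain ⟨q, hq, hq1, hq2⟩ := thin_center hgeo hthin hγ z
  have key : ∀ t ∈ Set.Icc (0:ℝ) (dist w x), dist w (γ t) = t ∧ dist x (γ t) = dist w x - t := by
    intro t ht
    have e1 := hγ.2.2 0 ⟨le_rfl, dist_nonneg⟩ t ht
    have e2 := hγ.2.2 (dist w x) ⟨dist_nonneg, le_rfl⟩ t ht
    rw [hγ.1] at e1
    rw [hγ.2.1] at e2
    rw [abs_of_nonpos (by linarith [ht.1])] at e1
    rw [abs_of_nonneg (by linarith [ht.2])] at e2
    exact ⟨by linarith, by linarith⟩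
  obtain ⟨p3, p4⟩ := key p hp
  obtain ⟨q3, q4⟩ := key q hq
  have t1 := dist_triangle y (γ p) z
  have t2 := dist_triangle (γ p) (γ q) z
  have e := hγ.2.2 p hp q hq
  rw [dist_comm y (γ p)] at t1
  rcases le_total p q with h | h
  · rw [abs_of_nonpos (by linarith)] at e
    have := le_max_right (dist w y + dist x z) (dist w z + dist x y)
    linarith
  · rw [abs_of_nonneg (by linarith)] at e
    have := le_max_left (dist w y + dist x z) (dist w z + dist x y)
    linarith

lemma geodesic_midpoint {H : Type*} [MetricSpace H] (hgeo : GeodesicSpace H) (x y : H) :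
    ∃ m, dist x m = dist x y / 2 ∧ dist y m = dist x y / 2 := by
  obtain ⟨γ, hγ⟩ := hgeo x y
  have hd : 0 ≤ dist x y := dist_nonneg
  have hm : dist x y / 2 ∈ Set.Icc (0:ℝ) (dist x y) := ⟨by linarith, by linarith⟩
  refine ⟨γ (dist x y / 2), ?_, ?_⟩
  · have e1 := hγ.2.2 0 ⟨le_rfl, dist_nonneg⟩ _ hm
    rw [hγ.1, abs_of_nonpos (by linarith)] at e1
    linarith
  · have e1 := hγ.2.2 (dist x y) ⟨dist_nonneg, le_rfl⟩ _ hm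
    rw [hγ.2.1, abs_of_nonneg (by linarith)] at e1
    linarith

/-- Displacement of a midpoint. -/
lemma midpoint_displacement {H : Type*} [MetricSpace H] {δ : ℝ} (h4 : FourPt H δ)
    (τ : H ≃ᵢ H) {x y m : H} (h1 : dist x m = dist x y / 2) (h2 : dist y m = dist x y / 2)
    {R : ℝ} (a : dist x (τ x) ≤ R) (b : dist x (τ y) ≤ R) (c : dist y (τ x) ≤ R)
    (d : dist y (τ y) ≤ R) : dist m (τ m) ≤ R - dist x y + 2 * δ := by
  have step : ∀ (z : H) (u v n : H) (r : ℝ), dist u n = dist u v / 2 → dist v n = dist u v / 2 →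
      dist z u ≤ r → dist z v ≤ r → dist z n ≤ r - dist u v / 2 + δ := by
    intro z u v n r hu hv hzu hzv
    have := h4 z n u v
    rw [dist_comm n v, dist_comm n u] at this
    have : max (dist z u + dist v n) (dist z v + dist u n) ≤ r + dist u v / 2 :=
      max_le (by linarith) (by linarith)
    linarith
  have e1 : dist (τ x) (τ m) = dist (τ x) (τ y) / 2 := by rw [τ.dist_eq, τ.dist_eq]; exact h1
  have e2 : dist (τ y) (τ m) = dist (τ x) (τ y) / 2 := by rw [τ.dist_eq, τ.dist_eq]; exact h2
  have f1 := step x (τ x) (τ y) (τ m) R e1 e2 a b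
  have f2 := step y (τ x) (τ y) (τ m) R e1 e2 c d
  have e3 : dist (τ x) (τ y) = dist x y := τ.dist_eq _ _
  rw [e3] at f1 f2
  have f3 := step (τ m) x y m (R - dist x y / 2 + δ) h1 h2
    (by rw [dist_comm]; exact f1) (by rw [dist_comm]; exact f2)
  rw [dist_comm]
  linarith

lemma translationLength_le {H : Type*} [MetricSpace H] (τ : H ≃ᵢ H) (x : H) :
    translationLength τ ≤ dist x (τ x) :=
  ciInf_le ⟨0, by rintro _ ⟨y, rfl⟩; exact dist_nonneg⟩ x

lemma translationLength_nonneg {H : Type*} [MetricSpace H] (τ : H ≃ᵢ H) :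
    0 ≤ translationLength τ :=
  Real.iInf_nonneg fun _ => dist_nonneg

lemma translationLength_lower {H : Type*} [MetricSpace H] {δ : ℝ} (hδ : 0 ≤ δ)
    (h4 : FourPt H δ) (τ : H ≃ᵢ H) (x : H) :
    max 0 (dist x (τ (τ x)) - dist x (τ x)) - δ ≤ translationLength τ := by
  rw [sub_le_iff_le_add]
  refine max_le (by linarith [translationLength_nonneg τ]) ?_
  rw [← sub_le_iff_le_add]
  have : Nonempty H := ⟨x⟩
  refine le_ciInf fun y => ?_
  have h := h4 x (τ (τ x)) (τ x) (τ y)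
  have e1 : dist (τ x) (τ y) = dist x y := τ.dist_eq _ _
  have e2 : dist (τ (τ x)) (τ y) = dist (τ x) y := τ.dist_eq _ _
  have e3 : dist (τ (τ x)) (τ x) = dist (τ x) x := τ.dist_eq _ _
  rw [e1, e2, e3] at h
  have t1 := dist_triangle (τ x) (τ y) y
  have t2 := dist_triangle x y (τ y)
  rw [e1, dist_comm (τ y) y] at t1
  rw [dist_comm (τ x) x] at h
  have : max (dist x (τ x) + dist (τ x) y) (dist x (τ y) + dist x (τ x)) ≤
    dist x (τ x) + dist x y + dist y (τ y) := max_le (by linarith) (by linarith)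
  linarith

lemma translationLength_upper {H : Type*} [MetricSpace H] {δ : ℝ}
    (hgeo : GeodesicSpace H) (h4 : FourPt H δ) (τ : H ≃ᵢ H) (x : H) :
    translationLength τ ≤ max 0 (dist x (τ (τ x)) - dist x (τ x)) + 2 * δ := by
  obtain ⟨m, h1, h2⟩ := geodesic_midpoint hgeo x (τ x)
  have h0 : 0 ≤ dist x (τ x) := dist_nonneg
  have hl := le_max_left 0 (dist x (τ (τ x)) - dist x (τ x))
  have hr := le_max_right 0 (dist x (τ (τ x)) - dist x (τ x))
  have := midpoint_displacement h4 τ h1 h2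
    (R := max 0 (dist x (τ (τ x)) - dist x (τ x)) + dist x (τ x))
    (by linarith) (by linarith) (by rw [dist_self]; linarith)
    (by have : dist (τ x) (τ (τ x)) = dist x (τ x) := τ.dist_eq _ _
        linarith)
  have := translationLength_le τ m
  linarith

/-- A `0`-hyperbolic pseudo-distance on a type. -/
structure ZeroHyp (G : Type*) where
  d : G → G → ℝ
  d_self : ∀ x, d x x = 0
  d_comm : ∀ x y, d x y = d y x
  four : ∀ w x y z, d w x + d y z ≤ max (d w y + d x z) (d w z + d x y)

/-- Formal points on segments between points of a `0`-hyperbolic space. -/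
structure TreePt {G : Type*} (D : ZeroHyp G) where
  e : Bool → G
  w : Bool → ℝ
  nonneg : ∀ i, 0 ≤ w i
  sum : w false + w true = D.d (e false) (e true)

namespace TreePt

variable {G : Type*} {D : ZeroHyp G}

lemma sum' (p : TreePt D) (i : Bool) : p.w i + p.w (!i) = D.d (p.e i) (p.e (!i)) := by
  cases i
  · exact p.sum
  · rw [D.d_comm, add_comm]; exact p.sum

/-- The distance between formal points. -/
noncomputable def pdist (p q : TreePt D) : ℝ :=
  max (max (D.d (p.e false) (q.e false) - p.w false - q.w false)
        (D.d (p.e false) (q.e true) - p.w false - q.w true))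
      (max (D.d (p.e true) (q.e false) - p.w true - q.w false)
        (D.d (p.e true) (q.e true) - p.w true - q.w true))

lemma le_pdist (p q : TreePt D) (i j : Bool) :
    D.d (p.e i) (q.e j) - p.w i - q.w j ≤ pdist p q := by
  unfold pdist
  cases i <;> cases j <;> simp

lemma exists_pdist (p q : TreePt D) :
    ∃ i j, pdist p q = D.d (p.e i) (q.e j) - p.w i - q.w j := by
  unfold pdist
  rcases max_choice (max (D.d (p.e false) (q.e false) - p.w false - q.w false)
        (D.d (p.e false) (q.e true) - p.w false - q.w true))
      (max (D.d (p.e true) (q.e false) - p.w true - q.w false)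
        (D.d (p.e true) (q.e true) - p.w true - q.w true)) with h | h <;> rw [h]
  · rcases max_choice (D.d (p.e false) (q.e false) - p.w false - q.w false)
        (D.d (p.e false) (q.e true) - p.w false - q.w true) with h | h <;> rw [h]
    · exact ⟨_, _, rfl⟩
    · exact ⟨_, _, rfl⟩
  · rcases max_choice (D.d (p.e true) (q.e false) - p.w true - q.w false)
        (D.d (p.e true) (q.e true) - p.w true - q.w true) with h | h <;> rw [h]
    · exact ⟨_, _, rfl⟩
    · exact ⟨_, _, rfl⟩

lemma pdist_le (p q : TreePt D) (r : ℝ)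
    (h : ∀ i j, D.d (p.e i) (q.e j) - p.w i - q.w j ≤ r) : pdist p q ≤ r := by
  obtain ⟨i, j, hij⟩ := exists_pdist p q
  rw [hij]; exact h i j

lemma pdist_four (p q r s : TreePt D) :
    pdist p q + pdist r s ≤ max (pdist p r + pdist q s) (pdist p s + pdist q r) := by
  obtain ⟨i, j, hij⟩ := exists_pdist p q
  obtain ⟨k, l, hkl⟩ := exists_pdist r s
  have h := D.four (p.e i) (q.e j) (r.e k) (s.e l)
  have h1 := le_pdist p r i k
  have h2 := le_pdist q s j l
  have h3 := le_pdist p s i l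
  have h4 := le_pdist q r j k
  rcases le_max_iff.1 h with h | h
  · exact le_max_of_le_left (by linarith)
  · exact le_max_of_le_right (by linarith)

lemma pdist_comm (p q : TreePt D) : pdist p q = pdist q p := by
  have : ∀ p q : TreePt D, pdist p q ≤ pdist q p := by
    intro p q
    refine pdist_le _ _ _ fun i j => ?_
    have := le_pdist q p j i
    rw [D.d_comm]; linarith
  exact le_antisymm (this p q) (this q p)

lemma pdist_self (p : TreePt D) : pdist p p = 0 := by
  apply le_antisymm
  · refine pdist_le _ _ _ fun i j => ?_
    by_cases h : j = i
    · subst h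
      rw [D.d_self]; linarith [p.nonneg j]
    · have : j = !i := by cases i <;> cases j <;> simp_all
      subst this
      linarith [p.sum' i]
  · have := le_pdist p p false true
    linarith [p.sum]

noncomputable instance : PseudoMetricSpace (TreePt D) where
  dist := pdist
  dist_self := pdist_self
  dist_comm := pdist_comm
  dist_triangle x y z := by
    have := pdist_four x z y y
    rw [pdist_self, add_zero, max_self, pdist_comm z y] at this
    exact this

lemma dist_def (p q : TreePt D) : dist p q = pdist p q := rfl

/-- The vertex point. -/
def pt (g : G) : TreePt D where
  e := fun _ => g
  w := fun _ => 0
  nonneg := fun _ => le_rfl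
  sum := by simp [D.d_self]

lemma dist_pt (g h : G) : dist (pt g : TreePt D) (pt h) = D.d g h := by
  simp [dist_def, pdist, pt]

/-- Point on the segment from `a` to `b`. -/
def seg (a b : G) (s : ℝ) (h0 : 0 ≤ s) (h1 : s ≤ D.d a b) : TreePt D where
  e := fun i => bif i then b else a
  w := fun i => bif i then D.d a b - s else s
  nonneg := by rintro (_ | _) <;> simp <;> linarith
  sum := by simp

lemma dist_seg (a b : G) (s t : ℝ) (h0 : 0 ≤ s) (h1 : s ≤ D.d a b) (h2 : 0 ≤ t)
    (h3 : t ≤ D.d a b) : dist (seg a b s h0 h1 : TreePt D) (seg a b t h2 h3) = |s - t| := by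
  apply le_antisymm
  · refine pdist_le _ _ _ ?_
    have := abs_le.1 (le_refl |s - t|)
    have := D.d_comm a b
    rintro (_ | _) (_ | _) <;> simp [seg, D.d_self] <;> linarith
  · have e1 := le_pdist (seg a b s h0 h1 : TreePt D) (seg a b t h2 h3) false true
    have e2 := le_pdist (seg a b s h0 h1 : TreePt D) (seg a b t h2 h3) true false
    have := D.d_comm a b
    rw [dist_def]
    simp [seg] at e1 e2
    exact abs_le.2 ⟨by simp only [seg]; linarith, by simp only [seg]; linarith⟩

/-- Any two formal points lie on a common segment. -/
lemma exists_seg (p q : TreePt D) : ∃ (a b : G) (s : ℝ) (h0 : 0 ≤ s)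
    (h1 : s + dist p q ≤ D.d a b),
    dist p (seg a b s h0 (by have : 0 ≤ dist p q := dist_nonneg
                             linarith)) = 0 ∧
    dist q (seg a b (s + dist p q) (add_nonneg h0 dist_nonneg) h1) = 0 := by
  obtain ⟨i, j, hij⟩ := exists_pdist p q
  have hd : dist p q = _ := hij
  have hpi := p.nonneg i
  have hqj := q.nonneg j
  refine ⟨p.e i, q.e j, p.w i, hpi, by linarith, ?_, ?_⟩
  · apply le_antisymm _ dist_nonneg
    refine pdist_le _ _ _ ?_
    intro k l
    have hk : k = i ∨ k = !i := by cases k <;> cases i <;> simp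
    have m := le_pdist p q k j
    cases l
    · simp only [seg, cond_false]
      rcases hk with rfl | rfl
      · rw [D.d_self]; linarith
      · have := p.sum' i
        rw [D.d_comm]; linarith
    · simp only [seg, cond_true]
      linarith
  · apply le_antisymm _ dist_nonneg
    refine pdist_le _ _ _ ?_
    intro k l
    have hk : k = j ∨ k = !j := by cases k <;> cases j <;> simp
    have m := le_pdist p q i k
    cases l
    · simp only [seg, cond_false]
      rw [D.d_comm]; linarith
    · simp only [seg, cond_true]
      rcases hk with rfl | rfl
      · rw [D.d_self]; linarith
      · have := q.sum' j
        rw [D.d_comm]; linarith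

end TreePt

/-- The tree spanned by a `0`-hyperbolic pseudo-distance. -/
abbrev TreeOf {G : Type*} (D : ZeroHyp G) := SeparationQuotient (TreePt D)

lemma treeOf_fourPt {G : Type*} (D : ZeroHyp G) : FourPt (TreeOf D) 0 := by
  intro w x y z
  obtain ⟨w, rfl⟩ := SeparationQuotient.surjective_mk w
  obtain ⟨x, rfl⟩ := SeparationQuotient.surjective_mk x
  obtain ⟨y, rfl⟩ := SeparationQuotient.surjective_mk y
  obtain ⟨z, rfl⟩ := SeparationQuotient.surjective_mk z
  simp only [SeparationQuotient.dist_mk, add_zero]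
  exact TreePt.pdist_four _ _ _ _

lemma treeOf_geodesic {G : Type*} (D : ZeroHyp G) : GeodesicSpace (TreeOf D) := by
  intro x y
  obtain ⟨p, rfl⟩ := SeparationQuotient.surjective_mk x
  obtain ⟨q, rfl⟩ := SeparationQuotient.surjective_mk y
  obtain ⟨a, b, s, h0, h1, hp, hq⟩ := TreePt.exists_seg p q
  have hpq : 0 ≤ dist p q := dist_nonneg
  have hex : ∀ t : ℝ, ∃ z : TreeOf D, ∀ (h : 0 ≤ t) (h' : t ≤ dist p q),
      z = SeparationQuotient.mk (TreePt.seg a b (s + t) (by linarith) (by linarith)) := by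
    intro t
    by_cases h : 0 ≤ t ∧ t ≤ dist p q
    · exact ⟨SeparationQuotient.mk (TreePt.seg a b (s + t) (by linarith) (by linarith)),
        fun _ _ => rfl⟩
    · exact ⟨SeparationQuotient.mk p, fun h1 h2 => absurd ⟨h1, h2⟩ h⟩
  choose γ hγ using hex
  refine ⟨γ, ?_, ?_, ?_⟩
  · rw [hγ 0 le_rfl hpq]
    apply dist_le_zero.1
    rw [SeparationQuotient.dist_mk, dist_comm]
    simp only [add_zero]
    exact hp.le
  · rw [SeparationQuotient.dist_mk, hγ _ hpq le_rfl]
    apply dist_le_zero.1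
    rw [SeparationQuotient.dist_mk, dist_comm]
    exact hq.le
  · rw [SeparationQuotient.dist_mk]
    intro u hu v hv
    rw [hγ u hu.1 hu.2, hγ v hv.1 hv.2, SeparationQuotient.dist_mk, TreePt.dist_seg]
    congr 1; ring

/-- In a `0`-hyperbolic space every path from `a` to `b` passes through every point between. -/
lemma path_through {T : Type*} [MetricSpace T] (h4 : FourPt T 0) {a b p : T}
    (hp : dist a p + dist p b = dist a b) {α : ℝ → T} {u v : ℝ} (huv : u ≤ v)
    (hα : ContinuousOn α (Set.Icc u v)) (hu : α u = a) (hv : α v = b) :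
    ∃ s ∈ Set.Icc u v, α s = p := by
  by_contra hne
  push Not at hne
  set I := Set.Icc u v with hI
  have huI : u ∈ I := ⟨le_rfl, huv⟩
  have hvI : v ∈ I := ⟨huv, le_rfl⟩
  have hpc : IsPreconnected I := isPreconnected_Icc
  have hS : ∀ s ∈ I, ∀ x, dist x (α s) < dist p (α s) →
      (dist a x < dist p a + dist p x ↔ dist a (α s) < dist p a + dist p (α s)) := by
    intro s hs x hx
    have h1 := h4 a x (α s) p
    have h2 := h4 a (α s) x p
    have := dist_comm (α s) p
    have := dist_comm x p
    have := dist_comm a p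
    have := dist_comm (α s) x
    have : dist x p ≤ dist x (α s) + dist (α s) p := dist_triangle _ _ _
    have : 0 < dist p (α s) - dist x (α s) := by linarith
    have : 0 ≤ dist x p := dist_nonneg
    constructor
    · intro h
      rcases le_max_iff.1 (sub_le_iff_le_add.2 h2) with h | h <;> linarith
    · intro h
      rcases le_max_iff.1 (sub_le_iff_le_add.2 h1) with h | h <;> linarith
  have hpre := isPreconnected_iff_subset_of_disjoint.1 (hpc.image α hα)
  let U : Set T := {x | dist a x < dist p a + dist p x}
  have hU : IsOpen U := isOpen_lt (by fun_prop) (by fun_prop)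
  let V : Set T := ⋃ s ∈ {s | s ∈ I ∧ α s ∉ U}, Metric.ball (α s) (dist p (α s))
  have hV : IsOpen V := isOpen_biUnion fun _ _ => Metric.isOpen_ball
  have hpos : ∀ s ∈ I, 0 < dist p (α s) := fun s hs => dist_pos.2 (hne s hs).symm
  have haU : a ∈ U := by
    have := hpos u huI
    rw [hu] at this
    change dist a a < dist p a + dist p a
    rw [dist_self]; linarith
  have hbU : b ∉ U := by
    change ¬ (dist a b < dist p a + dist p b)
    rw [dist_comm p a]; linarith
  rcases hpre U V hU hV
    (by
      rintro _ ⟨s, hs, rfl⟩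
      by_cases h : α s ∈ U
      · exact Or.inl h
      · exact Or.inr (Set.mem_biUnion (x := s) ⟨hs, h⟩ (Metric.mem_ball_self (hpos s hs))))
    (by
      rw [Set.eq_empty_iff_forall_notMem]
      rintro x ⟨_, hxU, hxV⟩
      obtain ⟨s, hs, hx⟩ := Set.mem_iUnion₂.1 hxV
      exact hs.2 ((hS s hs.1 x hx).1 hxU)) with h | h
  · exact hbU (h ⟨v, hvI, hv⟩)
  · obtain ⟨s, hs, hx⟩ := Set.mem_iUnion₂.1 (h ⟨u, huI, hu⟩)
    exact hs.2 ((hS s hs.1 a hx).1 haU)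

lemma arc_image {T : Type*} [MetricSpace T] (hgeo : GeodesicSpace T) (h4 : FourPt T 0)
    {a b : T} {α : ℝ → T} (hα : IsArcParam α a b) :
    α '' Set.Icc 0 1 = {p | dist a p + dist p b = dist a b} := by
  obtain ⟨hc, hinj, h0, h1⟩ := hα
  apply Set.Subset.antisymm
  · rintro _ ⟨s, hs, rfl⟩
    set q := α s with hq
    obtain ⟨γ, hγ⟩ := hgeo a b
    -- the median point
    set t := (dist a b + dist a q - dist b q) / 2 with ht
    have t1 := dist_triangle a q b
    have t2 := dist_triangle a b q
    have t3 := dist_triangle b a q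
    have c1 := dist_comm a b
    have c2 := dist_comm q b
    have htI : t ∈ Set.Icc (0:ℝ) (dist a b) := ⟨by linarith, by linarith⟩
    set c := γ t with hcdef
    have e1 := hγ.2.2 0 ⟨le_rfl, dist_nonneg⟩ t htI
    have e2 := hγ.2.2 (dist a b) ⟨dist_nonneg, le_rfl⟩ t htI
    rw [hγ.1, abs_of_nonpos (by linarith [htI.1])] at e1
    rw [hγ.2.1, abs_of_nonneg (by linarith [htI.2])] at e2
    have f := h4 q c a b
    have c3 := dist_comm q a
    have c4 := dist_comm c a
    have c5 := dist_comm c b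
    have c6 := dist_comm c q
    have t4 := dist_triangle a c q
    have t5 := dist_triangle b c q
    have hqc : dist q c ≤ (dist a q + dist b q - dist a b) / 2 := by
      rcases le_max_iff.1 (sub_le_iff_le_add.2 f) with f | f <;> linarith
    have b1 : dist a c + dist c q = dist a q := by linarith
    have b2 : dist q c + dist c b = dist q b := by linarith
    obtain ⟨u, hu, hu'⟩ := path_through h4 b1 hs.1
      (hc.mono (Set.Icc_subset_Icc le_rfl hs.2)) h0 hq.symm
    obtain ⟨v, hv, hv'⟩ := path_through h4 b2 hs.2
      (hc.mono (Set.Icc_subset_Icc hs.1 le_rfl)) hq.symm h1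
    have huv : u = v := hinj ⟨hu.1, hu.2.trans hs.2⟩ ⟨hs.1.trans hv.1, hv.2⟩ (hu'.trans hv'.symm)
    have hus : u = s := le_antisymm hu.2 (huv ▸ hv.1)
    have hqc : q = c := by rw [hq, ← hus, hu']
    change dist a q + dist q b = dist a b
    rw [hqc]; linarith
  · intro p hp
    exact path_through h4 hp zero_le_one hc h0 h1

lemma isRTree_of_fourPt {T : Type*} [MetricSpace T] (hgeo : GeodesicSpace T)
    (h4 : FourPt T 0) : IsRTree T :=
  ⟨hgeo, fun _ _ _ _ hα hβ => (arc_image hgeo h4 hα).trans (arc_image hgeo h4 hβ).symm⟩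

/-- The map of the tree induced by a distance preserving map. -/
def TreePt.map {G : Type*} {D : ZeroHyp G} (f : G → G) (hf : ∀ x y, D.d (f x) (f y) = D.d x y)
    (p : TreePt D) : TreePt D where
  e := fun i => f (p.e i)
  w := p.w
  nonneg := p.nonneg
  sum := by rw [hf]; exact p.sum

lemma TreePt.dist_map {G : Type*} {D : ZeroHyp G} (f : G → G)
    (hf : ∀ x y, D.d (f x) (f y) = D.d x y) (p q : TreePt D) :
    dist (p.map f hf) (q.map f hf) = dist p q := by
  simp only [TreePt.dist_def, TreePt.pdist, TreePt.map, hf]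

/-- An invariant `0`-hyperbolic pseudo-distance gives an action on a tree. -/
lemma exists_tree_action {G : Type u} [Group G] (D : ZeroHyp G)
    (hinv : ∀ k x y, D.d (k * x) (k * y) = D.d x y) :
    ∃ (Γ : Type u) (_ : MetricSpace Γ), IsRTree Γ ∧
      ∃ σ : G →* (Γ ≃ᵢ Γ), ∀ g : G,
        translationLength (σ g) = max 0 (D.d 1 (g * g) - D.d 1 g) := by
  refine ⟨TreeOf D, inferInstance, isRTree_of_fourPt (treeOf_geodesic D) (treeOf_fourPt D), ?_⟩
  let act : MulAction G (TreePt D) :=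
    { smul := fun k p => p.map (fun x => k * x) (hinv k)
      one_smul := by
        intro p
        change p.map _ _ = p
        simp [TreePt.map]
      mul_smul := by
        intro a b p
        change p.map _ _ = (p.map _ _).map _ _
        simp [TreePt.map, mul_assoc] }
  have hsm : ∀ (k : G) (p : TreePt D), k • p = p.map (fun x => k * x) (hinv k) := fun _ _ => rfl
  have : IsIsometricSMul G (TreePt D) :=
    ⟨fun k => Isometry.of_dist_eq fun p q => TreePt.dist_map _ (hinv k) p q⟩
  have : IsIsometricSMul G (TreeOf D) := by
    refine ⟨fun k => Isometry.of_dist_eq fun p q => ?_⟩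
    obtain ⟨p, rfl⟩ := SeparationQuotient.surjective_mk p
    obtain ⟨q, rfl⟩ := SeparationQuotient.surjective_mk q
    rw [← SeparationQuotient.mk_smul, ← SeparationQuotient.mk_smul, SeparationQuotient.dist_mk,
      SeparationQuotient.dist_mk, dist_smul]
  let σ : G →* (TreeOf D ≃ᵢ TreeOf D) :=
    { toFun := fun g => IsometryEquiv.constSMul g
      map_one' := by ext x; simp
      map_mul' := by intro a b; ext x; simp [mul_smul] }
  have hσ : ∀ g h, σ g (SeparationQuotient.mk (TreePt.pt h)) =
      SeparationQuotient.mk (TreePt.pt (g * h)) := by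
    intro g h
    change g • (SeparationQuotient.mk (TreePt.pt h) : TreeOf D) = _
    rw [← SeparationQuotient.mk_smul]
    rfl
  refine ⟨σ, fun g => ?_⟩
  have lo := translationLength_lower le_rfl (treeOf_fourPt D) (σ g)
    (SeparationQuotient.mk (TreePt.pt 1))
  have hi := translationLength_upper (treeOf_geodesic D) (treeOf_fourPt D) (σ g)
    (SeparationQuotient.mk (TreePt.pt 1))
  rw [hσ, hσ, SeparationQuotient.dist_mk, SeparationQuotient.dist_mk, TreePt.dist_pt,
    TreePt.dist_pt, mul_one] at lo hi
  linarith

/-- If all elements are elliptic then the displacement function is ultrametric. -/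
lemma ultra_of_elliptic {G : Type*} [Group G] {N : G → ℝ} (hinv : ∀ g, N g⁻¹ = N g)
    (h4 : ∀ w x y z, N (w⁻¹ * x) + N (y⁻¹ * z) ≤
      max (N (w⁻¹ * y) + N (x⁻¹ * z)) (N (w⁻¹ * z) + N (x⁻¹ * y)))
    (hell : ∀ g, N (g * g) ≤ N g) (a b : G) : N (a * b) ≤ max (N a) (N b) := by
  by_contra hlt
  push Not at hlt
  obtain ⟨hu, hl⟩ := max_lt_iff.1 hlt
  have i1 : N (b⁻¹ * a) = N (a⁻¹ * b) := by rw [← hinv]; simp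
  have i2 : N (b * a) = N (a⁻¹ * b⁻¹) := by rw [← hinv]; simp
  have ha := hell a
  have hb := hell b
  have hab := hell (a * b)
  have f1 := h4 a⁻¹ b 1 a
  have f2 := h4 a b 1 b⁻¹
  have f3 := h4 b⁻¹ a 1 (b⁻¹ * a⁻¹)
  have f4 := h4 (b⁻¹ * a⁻¹) a 1 (a * b)
  have j1 : N (b⁻¹ * b⁻¹) = N (b * b) := by rw [← hinv]; simp
  have j2 : N (a⁻¹ * (b⁻¹ * a⁻¹)) = N (a * (b * a)) := by rw [← hinv]; simp [mul_assoc]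
  have j3 : N (b⁻¹ * a⁻¹) = N (a * b) := by rw [← hinv]; simp
  simp only [inv_inv, mul_one, one_mul, inv_one, hinv, mul_inv_rev, mul_assoc, mul_inv_cancel_left,
    inv_mul_cancel_left, i1, j1, i2, j2, j3] at f1 f2 f3 f4 hab
  rcases le_max_iff.1 f1 with f1 | f1 <;> rcases le_max_iff.1 f2 with f2 | f2 <;>
  rcases le_max_iff.1 f3 with f3 | f3 <;> rcases le_max_iff.1 f4 with f4 | f4 <;> linarith

lemma exists_subseq_pointwise {G : Type*} [Countable G] (f : ℕ → G → ℝ) (C : G → ℝ)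
    (h : ∀ n g, |f n g| ≤ C g) : ∃ φ : ℕ → ℕ, StrictMono φ ∧ ∃ L : G → ℝ, ∀ g,
      Filter.Tendsto (fun i => f (φ i) g) Filter.atTop (nhds (L g)) := by
  have hK : IsCompact (Set.univ.pi fun g => Set.Icc (-C g) (C g)) :=
    isCompact_univ_pi fun g => isCompact_Icc
  obtain ⟨L, -, φ, hφ, hL⟩ := hK.isSeqCompact (x := f)
    (fun n => Set.mem_univ_pi.2 fun g => abs_le.1 (h n g))
  exact ⟨φ, hφ, L, fun g => (tendsto_pi_nhds.1 hL) g⟩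

/-- The displacement of an element is controlled by the displacement of generators. -/
lemma displacement_bound {G : Type*} [Group G] (S : Finset G)
    (hS : Subgroup.closure (S : Set G) = ⊤) (g : G) :
    ∃ C : ℝ, 0 ≤ C ∧ ∀ (X : Type v) [MetricSpace X] (ρ : G →* (X ≃ᵢ X)) (x : X),
      dist x (ρ g x) ≤ C * ∑ s ∈ S, dist x (ρ s x) := by
  have hg : g ∈ Subgroup.closure (S : Set G) := by rw [hS]; trivial
  induction hg using Subgroup.closure_induction with
  | mem g hg =>
    refine ⟨1, zero_le_one, fun X _ ρ x => ?_⟩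
    rw [one_mul]
    exact Finset.single_le_sum (f := fun s => dist x (ρ s x)) (fun _ _ => dist_nonneg)
      (Finset.mem_coe.1 hg)
  | one =>
    refine ⟨0, le_rfl, fun X _ ρ x => ?_⟩
    simp
  | mul a b _ _ ha hb =>
    obtain ⟨A, hA, hA'⟩ := ha
    obtain ⟨B, hB, hB'⟩ := hb
    refine ⟨A + B, by positivity, fun X _ ρ x => ?_⟩
    have h1 := dist_triangle x (ρ a x) (ρ (a * b) x)
    have h2 : dist (ρ a x) (ρ (a * b) x) = dist x (ρ b x) := by
      rw [map_mul, IsometryEquiv.mul_apply]; exact (ρ a).dist_eq _ _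
    have := hA' X ρ x
    have := hB' X ρ x
    rw [add_mul]; linarith
  | inv a _ ha =>
    obtain ⟨A, hA, hA'⟩ := ha
    refine ⟨A, hA, fun X _ ρ x => ?_⟩
    have h2 : dist (ρ a x) (ρ a (ρ a⁻¹ x)) = dist x (ρ a⁻¹ x) := (ρ a).dist_eq _ _
    rw [← IsometryEquiv.mul_apply, ← map_mul, mul_inv_cancel, map_one] at h2
    have h3 : (1 : X ≃ᵢ X) x = x := rfl
    rw [h3, dist_comm] at h2
    rw [← h2]
    exact hA' X ρ x

/-- The limit of rescaled actions along a sequence with converging displacement functions. -/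
lemma limit_tree {G : Type u} [Group G] {Δ : ℝ} (hΔ : 0 < Δ) (S : Finset G)
    (hS : Subgroup.closure (S : Set G) = ⊤)
    (X : ℕ → Type v) [∀ n, MetricSpace (X n)]
    (hgeo : ∀ n, GeodesicSpace (X n)) (hthin : ∀ n, ThinTriangles (X n) Δ)
    (ρ : ∀ n, G →* (X n ≃ᵢ X n)) (D : ℕ → ℝ) (hD : ∀ n, 1 ≤ D n)
    (hDt : Tendsto D atTop atTop) (hlow : ∀ n (x : X n), D n ≤ ∑ s ∈ S, dist x (ρ n s x))
    (x : ∀ n, X n) (N : G → ℝ)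
    (hN : ∀ g, Tendsto (fun n => (D n)⁻¹ * dist (x n) (ρ n g (x n))) atTop (nhds (N g))) :
    ∃ (Γ : Type u) (_ : MetricSpace Γ), IsRTree Γ ∧
      ∃ σ : G →* (Γ ≃ᵢ Γ),
        (¬ ∃ z : Γ, ∀ g : G, σ g z = z) ∧
        (∃ g : G, translationLength (σ g) ≠ 0) ∧
        ∀ g : G, Tendsto (fun i => (D i)⁻¹ * translationLength (ρ i g))
            atTop (nhds (translationLength (σ g))) := by
  have hlam : Tendsto (fun n => (D n)⁻¹) atTop (nhds 0) := hDt.inv_tendsto_atTop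
  have hpos : ∀ n, 0 < (D n)⁻¹ := fun n => inv_pos.2 (by linarith [hD n])
  have h4 : ∀ n, FourPt (X n) (4 * Δ) := fun n => thin_fourPt (hgeo n) (hthin n)
  have hρd : ∀ n (g h : G), dist (ρ n g (x n)) (ρ n h (x n)) =
      dist (x n) (ρ n (g⁻¹ * h) (x n)) := by
    intro n g h
    have : dist (ρ n g (x n)) (ρ n g (ρ n (g⁻¹ * h) (x n))) = _ := (ρ n g).dist_eq _ _
    rwa [← IsometryEquiv.mul_apply, ← map_mul, mul_inv_cancel_left] at this
  have N1 : N 1 = 0 := by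
    refine tendsto_nhds_unique (hN 1) ?_
    simp
  have Nnn : ∀ g, 0 ≤ N g := fun g =>
    ge_of_tendsto' (hN g) fun n => mul_nonneg (hpos n).le dist_nonneg
  have Ninv : ∀ g, N g⁻¹ = N g := by
    intro g
    refine tendsto_nhds_unique (hN g⁻¹) ?_
    refine (hN g).congr fun n => ?_
    have := hρd n g 1
    simp only [map_one, mul_one] at this
    rw [← this, dist_comm]; rfl
  have N4 : ∀ w x y z, N (w⁻¹ * x) + N (y⁻¹ * z) ≤
      max (N (w⁻¹ * y) + N (x⁻¹ * z)) (N (w⁻¹ * z) + N (x⁻¹ * y)) := by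
    intro a b c d
    have hl := (hN (a⁻¹ * b)).add (hN (c⁻¹ * d))
    have hr := ((((hN (a⁻¹ * c)).add (hN (b⁻¹ * d))).max
      ((hN (a⁻¹ * d)).add (hN (b⁻¹ * c)))).add (hlam.mul_const (4 * Δ)))
    rw [zero_mul, add_zero] at hr
    refine le_of_tendsto_of_tendsto' hl hr fun n => ?_
    have h := h4 n (ρ n a (x n)) (ρ n b (x n)) (ρ n c (x n)) (ρ n d (x n))
    simp only [hρd] at h
    have h' := mul_le_mul_of_nonneg_left h (hpos n).le
    rw [mul_add, mul_add, mul_max_of_nonneg _ _ (hpos n).le, mul_add, mul_add] at h'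
    exact h'
  let Z : ZeroHyp G :=
    { d := fun a b => N (a⁻¹ * b)
      d_self := fun a => by simp [N1]
      d_comm := fun a b => by rw [← Ninv]; simp
      four := N4 }
  obtain ⟨Γ, mΓ, hΓ, σ, hσ⟩ := exists_tree_action Z (by intro k a b; simp [Z, mul_assoc])
  have hσ' : ∀ g, translationLength (σ g) = max 0 (N (g * g) - N g) := by
    intro g; rw [hσ]; simp [Z]
  have hnz : ∃ g : G, translationLength (σ g) ≠ 0 := by
    by_contra hall
    push Not at hall
    have hell : ∀ g, N (g * g) ≤ N g := by
      intro g
      have h := hall g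
      rw [hσ'] at h
      have := le_max_right 0 (N (g * g) - N g)
      linarith
    have hult := ultra_of_elliptic Ninv N4 hell
    have hSne : S.Nonempty := by
      rw [Finset.nonempty_iff_ne_empty]
      rintro rfl
      have := hlow 0 (x 0)
      have := hD 0
      simp at *
      linarith
    obtain ⟨s0, hs0, hmax⟩ := S.exists_max_image N hSne
    have hNle : ∀ g, N g ≤ N s0 := by
      intro g
      have hg : g ∈ Subgroup.closure (S : Set G) := by rw [hS]; trivial
      induction hg using Subgroup.closure_induction with
      | mem g hg => exact hmax g hg
      | one => rw [N1]; exact Nnn _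
      | mul a b _ _ ha hb => exact (hult a b).trans (max_le ha hb)
      | inv a _ ha => rw [Ninv]; exact ha
    choose m hm1 hm2 using fun n => geodesic_midpoint (hgeo n) (x n) (ρ n s0 (x n))
    have hone : ∀ n, 1 ≤ ∑ s ∈ S, (max
        (max ((D n)⁻¹ * dist (x n) (ρ n s (x n))) ((D n)⁻¹ * dist (x n) (ρ n (s * s0) (x n))))
        (max ((D n)⁻¹ * dist (x n) (ρ n (s0⁻¹ * s) (x n)))
          ((D n)⁻¹ * dist (x n) (ρ n (s0⁻¹ * (s * s0)) (x n))))
        - (D n)⁻¹ * dist (x n) (ρ n s0 (x n)) + (D n)⁻¹ * (2 * (4 * Δ))) := by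
      intro n
      have h1 : 1 ≤ (D n)⁻¹ * ∑ s ∈ S, dist (m n) (ρ n s (m n)) := by
        have := mul_le_mul_of_nonneg_left (hlow n (m n)) (hpos n).le
        rwa [inv_mul_cancel₀ (by linarith [hD n])] at this
      refine h1.trans ?_
      rw [Finset.mul_sum]
      refine Finset.sum_le_sum fun s hs => ?_
      have hdisp := midpoint_displacement (h4 n) (ρ n s) (hm1 n) (hm2 n)
        (R := max (max (dist (x n) (ρ n s (x n))) (dist (x n) (ρ n (s * s0) (x n))))
          (max (dist (x n) (ρ n (s0⁻¹ * s) (x n))) (dist (x n) (ρ n (s0⁻¹ * (s * s0)) (x n)))))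
        (le_max_of_le_left (le_max_left _ _))
        (by
          rw [← IsometryEquiv.mul_apply, ← map_mul]
          exact le_max_of_le_left (le_max_right _ _))
        (by
          rw [hρd]
          exact le_max_of_le_right (le_max_left _ _))
        (by
          rw [← IsometryEquiv.mul_apply, ← map_mul, hρd]
          exact le_max_of_le_right (le_max_right _ _))
      have h' := mul_le_mul_of_nonneg_left hdisp (hpos n).le
      rw [mul_add, mul_sub, mul_max_of_nonneg _ _ (hpos n).le, mul_max_of_nonneg _ _ (hpos n).le,
        mul_max_of_nonneg _ _ (hpos n).le] at h'
      exact h'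
    have hlim := tendsto_finsetSum S fun s _ =>
      (((((hN s).max (hN (s * s0))).max
        ((hN (s0⁻¹ * s)).max (hN (s0⁻¹ * (s * s0))))).sub (hN s0)).add
          (hlam.mul_const (2 * (4 * Δ))))
    have h1 := ge_of_tendsto' hlim hone
    have h2 : ∑ s ∈ S, (max (max (N s) (N (s * s0)))
        (max (N (s0⁻¹ * s)) (N (s0⁻¹ * (s * s0)))) - N s0 + 0 * (2 * (4 * Δ))) ≤ 0 := by
      refine Finset.sum_nonpos fun s _ => ?_
      have : max (max (N s) (N (s * s0)))
        (max (N (s0⁻¹ * s)) (N (s0⁻¹ * (s * s0)))) ≤ N s0 :=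
        max_le (max_le (hNle _) (hNle _)) (max_le (hNle _) (hNle _))
      linarith
    linarith
  refine ⟨Γ, mΓ, hΓ, σ, ?_, hnz, ?_⟩
  · rintro ⟨z, hz⟩
    obtain ⟨g, hg⟩ := hnz
    apply hg
    apply le_antisymm _ (translationLength_nonneg _)
    have := translationLength_le (σ g) z
    rwa [hz g, dist_self] at this
  · intro g
    rw [hσ']
    have hmid := (tendsto_const_nhds (x := (0:ℝ)) (f := atTop (α := ℕ))).max
      ((hN (g * g)).sub (hN g))
    have hlo := hmid.sub (hlam.mul_const (4 * Δ))
    have hhi := hmid.add (hlam.mul_const (2 * (4 * Δ)))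
    rw [zero_mul, sub_zero] at hlo
    rw [zero_mul, add_zero] at hhi
    have hscale : ∀ n, max 0 ((D n)⁻¹ * dist (x n) (ρ n (g * g) (x n)) -
        (D n)⁻¹ * dist (x n) (ρ n g (x n))) =
        (D n)⁻¹ * max 0 (dist (x n) (ρ n g (ρ n g (x n))) - dist (x n) (ρ n g (x n))) := by
      intro n
      rw [mul_max_of_nonneg _ _ (hpos n).le, mul_zero, mul_sub, ← IsometryEquiv.mul_apply,
        ← map_mul]
    refine tendsto_of_tendsto_of_tendsto_of_le_of_le hlo hhi (fun n => ?_) (fun n => ?_)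
    · have h := mul_le_mul_of_nonneg_left
        (translationLength_lower (by positivity) (h4 n) (ρ n g) (x n)) (hpos n).le
      rw [mul_sub, ← hscale] at h
      exact h
    · have h := mul_le_mul_of_nonneg_left
        (translationLength_upper (hgeo n) (h4 n) (ρ n g) (x n)) (hpos n).le
      rw [mul_add, ← hscale] at h
      exact h

end Helpers

/-- Sequential compactness of the space of length functions of all
actions of a finitely generated group on geodesic spaces with `Δ`-thin triangles, in
`LF(G) ∪ PLF(G)`: every sequence of such length functions has a subsequence which either
converges pointwise in `LF(G)`, or, after rescaling by some `λ_n → 0`, converges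
pointwise to a nonzero length function which is the length function of an isometric
action of `G` on an `ℝ`-tree with no global fixed point. -/
theorem length_functions_compactification {G : Type u} [Group G] (hfg : Group.FG G)
    {Δ : ℝ} (hΔ : 0 < Δ)
    (X : ℕ → Type v) [∀ n, MetricSpace (X n)]
    (hgeo : ∀ n, GeodesicSpace (X n)) (hthin : ∀ n, ThinTriangles (X n) Δ)
    (ρ : ∀ n, G →* (X n ≃ᵢ X n)) :
    ∃ φ : ℕ → ℕ, StrictMono φ ∧
      ((∃ L : G → ℝ, ∀ g : G,
          Filter.Tendsto (fun i => translationLength (ρ (φ i) g)) Filter.atTop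
            (nhds (L g))) ∨
       (∃ lam : ℕ → ℝ, Filter.Tendsto lam Filter.atTop (nhds 0) ∧
          ∃ (Γ : Type u) (_ : MetricSpace Γ), IsRTree Γ ∧
            ∃ σ : G →* (Γ ≃ᵢ Γ),
              (¬ ∃ z : Γ, ∀ g : G, σ g z = z) ∧
              (∃ g : G, translationLength (σ g) ≠ 0) ∧
              ∀ g : G,
                Filter.Tendsto (fun i => lam i * translationLength (ρ (φ i) g))
                  Filter.atTop (nhds (translationLength (σ g))))) := by
  obtain ⟨S, hS⟩ := (Group.fg_def.1 hfg)
  have hcount : Countable G := by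
    obtain ⟨α, hα, f, hf⟩ := Group.fg_iff_exists_freeGroup_hom_surjective_finite.1 hfg
    have hq : Function.Surjective (FreeGroup.mk : List (α × Bool) → FreeGroup α) :=
      Quot.mk_surjective
    exact (hf.comp hq).countable
  choose C hC0 hC using fun g => displacement_bound S hS g
  let D : ℕ → ℝ := fun n => ⨅ x : X n, ∑ s ∈ S, dist x (ρ n s x)
  have hFnn : ∀ n (x : X n), 0 ≤ ∑ s ∈ S, dist x (ρ n s x) := fun n x =>
    Finset.sum_nonneg fun _ _ => dist_nonneg
  have hDnn : ∀ n, 0 ≤ D n := fun n => Real.iInf_nonneg (hFnn n)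
  have hDle : ∀ n (x : X n), D n ≤ ∑ s ∈ S, dist x (ρ n s x) := fun n x =>
    ciInf_le ⟨0, by rintro _ ⟨y, rfl⟩; exact hFnn n y⟩ x
  by_cases hDt : Tendsto D atTop atTop
  · obtain ⟨k, hk⟩ := eventually_atTop.1 (hDt.eventually_ge_atTop 1)
    have hne : ∀ i, Nonempty (X (i + k)) := by
      intro i
      by_contra hemp
      rw [not_nonempty_iff] at hemp
      have h1 := hk (i + k) (by omega)
      have h0 : D (i + k) = 0 := Real.iInf_of_isEmpty _
      linarith
    have hx : ∀ i, ∃ x : X (i + k), ∑ s ∈ S, dist x (ρ (i + k) s x) < D (i + k) + 1 := by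
      intro i
      have := hne i
      exact exists_lt_of_ciInf_lt (lt_add_one (D (i + k)))
    choose x hx using hx
    obtain ⟨φ, hφ, N, hN⟩ := exists_subseq_pointwise
      (fun i g => (D (i + k))⁻¹ * dist (x i) (ρ (i + k) g (x i))) (fun g => C g * 2) (by
        intro i g
        have h1 := hk (i + k) (by omega)
        have hp : 0 < (D (i + k))⁻¹ := inv_pos.2 (by linarith)
        rw [abs_of_nonneg (mul_nonneg hp.le dist_nonneg)]
        have h2 := hC g (X (i + k)) (ρ (i + k)) (x i)
        have h3 : C g * ∑ s ∈ S, dist (x i) (ρ (i + k) s (x i)) ≤ C g * (2 * D (i + k)) :=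
          mul_le_mul_of_nonneg_left (by linarith [hx i]) (hC0 g)
        have h4 := mul_le_mul_of_nonneg_left (h2.trans h3) hp.le
        refine h4.trans (le_of_eq ?_)
        have : D (i + k) ≠ 0 := by linarith
        field_simp)
    have hψ : StrictMono fun i => φ i + k := fun a b hab => Nat.add_lt_add_right (hφ hab) k
    have hDψ : Tendsto (fun i => D (φ i + k)) atTop atTop := hDt.comp hψ.tendsto_atTop
    refine ⟨fun i => φ i + k, hψ, Or.inr ⟨fun i => (D (φ i + k))⁻¹, hDψ.inv_tendsto_atTop, ?_⟩⟩
    exact limit_tree hΔ S hS (fun i => X (φ i + k)) (fun i => hgeo _) (fun i => hthin _)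
      (fun i => ρ (φ i + k)) (fun i => D (φ i + k)) (fun i => hk _ (by omega)) hDψ
      (fun i => hDle _) (fun i => x (φ i)) N hN
  · rw [Filter.tendsto_atTop] at hDt
    simp only [not_forall, Filter.not_eventually, not_le] at hDt
    obtain ⟨B, hB⟩ := hDt
    obtain ⟨φ, hφ, hφB⟩ := extraction_of_frequently_atTop hB
    obtain ⟨φ', hφ', L, hL⟩ := exists_subseq_pointwise
      (fun i g => translationLength (ρ (φ i) g)) (fun g => C g * (B + 1)) (by
        intro i g
        have hb := hφB i
        have hd := hDnn (φ i)
        rw [abs_of_nonneg (translationLength_nonneg _)]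
        rcases isEmpty_or_nonempty (X (φ i)) with he | he
        · have h0 : translationLength (ρ (φ i) g) = 0 := Real.iInf_of_isEmpty _
          rw [h0]
          exact mul_nonneg (hC0 g) (by linarith)
        · obtain ⟨y, hy⟩ := exists_lt_of_ciInf_lt (lt_add_one (D (φ i)))
          exact (translationLength_le _ y).trans ((hC g _ (ρ (φ i)) y).trans
            (mul_le_mul_of_nonneg_left (by linarith) (hC0 g))))
    exact ⟨φ ∘ φ', hφ.comp hφ', Or.inl ⟨L, hL⟩⟩
end
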